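/- Let β ∈ (0,1) and 1 ≤ q < n - nβ. If G ⊂ ℝⁿ is a bounded domain satisfying a β-quasihyperbolic boundary condition, then G supports the (q, n-nβ)-Poincaré inequality: there exists c < ∞ with (∫_G |u - u_G|^q)^{1/q} ≤ c (∫_G |∇u|^{n-nβ})^{1/(n-nβ)} for all u ∈ W^{1, n-nβ}(G). -/

import Mathlib

open MeasureTheory ENNReal

/-- The quasihyperbolic distance `k_G(x, y) = inf_γ ∫_γ ds / dist(z, ∂G)`, the infimum
being over rectifiable curves in `G` from `x` to `y`, parametrized by arc length
(encoded as `1`-Lipschitz parametrizations). -/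
noncomputable def qhDist {n : ℕ} (G : Set (EuclideanSpace ℝ (Fin n)))
    (x y : EuclideanSpace ℝ (Fin n)) : ℝ :=
  sInf {v : ℝ | ∃ (L : ℝ) (γ : ℝ → EuclideanSpace ℝ (Fin n)), 0 ≤ L ∧
    LipschitzWith 1 γ ∧ γ 0 = x ∧ γ L = y ∧ (∀ t ∈ Set.Icc (0:ℝ) L, γ t ∈ G) ∧
    v = ∫ t in (0:ℝ)..L, 1 / Metric.infDist (γ t) (frontier G)}

/-- `G` satisfies a `β`-quasihyperbolic boundary condition with base point `x₀` and
constant `c`: `k_G(x, x₀) ≤ (1/β) log(1/dist(x, ∂G)) + c` for all `x ∈ G`. -/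
def QHBCWith {n : ℕ} (G : Set (EuclideanSpace ℝ (Fin n))) (β : ℝ)
    (x₀ : EuclideanSpace ℝ (Fin n)) (c : ℝ) : Prop :=
  ∀ x ∈ G, qhDist G x x₀ ≤ (1 / β) * Real.log (1 / Metric.infDist x (frontier G)) + c

/-- `G` satisfies a `β`-quasihyperbolic boundary condition. -/
def QHBC {n : ℕ} (G : Set (EuclideanSpace ℝ (Fin n))) (β : ℝ) : Prop :=
  ∃ x₀ ∈ G, ∃ c : ℝ, QHBCWith G β x₀ c

/-- `G` supports the `(q,p)`-Poincaré inequality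
`(∫_G |u - u_G|^q)^{1/q} ≤ c (∫_G |∇u|^p)^{1/p}` for Sobolev functions on `G`. -/
def SupportsPoincare {n : ℕ} (G : Set (EuclideanSpace ℝ (Fin n))) (q p : ℝ) : Prop :=
  ∃ c : ℝ, ∀ u : EuclideanSpace ℝ (Fin n) → ℝ,
    DifferentiableOn ℝ u G → IntegrableOn u G volume →
    IntegrableOn (fun x => ‖fderivWithin ℝ u G x‖ ^ p) G volume →
    (∫ x in G, |u x - (∫ y in G, u y) / (volume G).toReal| ^ q) ^ (1 / q)
      ≤ c * (∫ x in G, ‖fderivWithin ℝ u G x‖ ^ p) ^ (1 / p)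


open MeasureTheory ENNReal

def Crv {n : ℕ} (G : Set (EuclideanSpace ℝ (Fin n))) (x y : EuclideanSpace ℝ (Fin n)) (v : ℝ) : Prop :=
  ∃ (L : ℝ) (γ : ℝ → EuclideanSpace ℝ (Fin n)), 0 ≤ L ∧
    LipschitzWith 1 γ ∧ γ 0 = x ∧ γ L = y ∧ (∀ t ∈ Set.Icc (0:ℝ) L, γ t ∈ G) ∧
    v = ∫ t in (0:ℝ)..L, 1 / Metric.infDist (γ t) (frontier G)

section A
variable {n : ℕ} {G : Set (EuclideanSpace ℝ (Fin n))}

lemma frontier_ne (hn : 2 ≤ n) (hne : G.Nonempty)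
    (hGb : Bornology.IsBounded G) : (frontier G).Nonempty := by
  have : Nonempty (Fin n) := ⟨⟨0, by omega⟩⟩
  rw [Set.nonempty_iff_ne_empty]
  intro h
  rcases frontier_eq_empty_iff.1 h with h | h
  · exact hne.ne_empty h
  · exact NormedSpace.unbounded_univ ℝ _ (h ▸ hGb)

lemma dd_pos (hf : (frontier G).Nonempty) (hGo : IsOpen G) {x} (hx : x ∈ G) :
    0 < Metric.infDist x (frontier G) := by
  rw [← isClosed_frontier.notMem_iff_infDist_pos hf]
  intro h
  rw [hGo.frontier_eq] at h
  exact h.2 hx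

lemma dd_lip (x y : EuclideanSpace ℝ (Fin n)) :
    Metric.infDist x (frontier G) ≤ Metric.infDist y (frontier G) + dist x y :=
  Metric.infDist_le_infDist_add_dist

lemma dd_ball (hGo : IsOpen G) {x} (hx : x ∈ G) :
    Metric.ball x (Metric.infDist x (frontier G)) ⊆ G := by
  rcases le_or_gt (Metric.infDist x (frontier G)) 0 with h | h
  · rw [Metric.ball_eq_empty.2 h]; exact Set.empty_subset _
  have hc : IsPreconnected (Metric.ball x (Metric.infDist x (frontier G))) :=
    (convex_ball _ _).isPreconnected
  by_contra hcon
  have := hc.subset_or_subset hGo (isClosed_closure (s := G)).isOpen_compl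
    (by
      rw [Set.disjoint_left]; intro y hy hy2; exact hy2 (subset_closure hy))
    (by
      intro y hy
      by_contra hy2
      simp only [Set.mem_union, Set.mem_compl_iff, not_or, not_not] at hy2
      have hyf : y ∈ frontier G := by
        rw [hGo.frontier_eq]; exact ⟨hy2.2, hy2.1⟩
      have := Metric.infDist_le_dist_of_mem (x := x) hyf
      rw [Metric.mem_ball, dist_comm] at hy
      linarith)
  rcases this with h1 | h1
  · exact hcon h1
  · exact h1 (Metric.mem_ball_self h) (subset_closure hx)

lemma dd_bdd (hf : (frontier G).Nonempty)
    (hGb : Bornology.IsBounded G) : ∃ D, 0 < D ∧ ∀ x ∈ G, Metric.infDist x (frontier G) ≤ D := by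
  obtain ⟨y, hy⟩ := hf
  obtain ⟨D, hD⟩ := hGb.subset_closedBall y
  refine ⟨max D 1, by positivity, fun x hx => ?_⟩
  have := Metric.infDist_le_dist_of_mem (x := x) hy
  have h2 := hD hx
  rw [Metric.mem_closedBall] at h2
  exact this.trans (h2.trans (le_max_left _ _))

lemma crv_cont (hf : (frontier G).Nonempty) (hGo : IsOpen G) {γ : ℝ → EuclideanSpace ℝ (Fin n)}
    (hγ : LipschitzWith 1 γ) {a b : ℝ} (h : ∀ t ∈ Set.Icc a b, γ t ∈ G) :
    ContinuousOn (fun t => 1 / Metric.infDist (γ t) (frontier G)) (Set.Icc a b) := by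
  apply ContinuousOn.div continuousOn_const
  · exact ((Metric.continuous_infDist_pt _).comp hγ.continuous).continuousOn
  · intro t ht
    exact (dd_pos hf hGo (h t ht)).ne'

lemma crv_int (hf : (frontier G).Nonempty) (hGo : IsOpen G) {γ : ℝ → EuclideanSpace ℝ (Fin n)}
    (hγ : LipschitzWith 1 γ) {a b : ℝ} (hab : a ≤ b) (h : ∀ t ∈ Set.Icc a b, γ t ∈ G) :
    IntervalIntegrable (fun t => 1 / Metric.infDist (γ t) (frontier G)) volume a b :=
  ContinuousOn.intervalIntegrable_of_Icc hab (crv_cont hf hGo hγ h)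

lemma crv_nonneg {x y v} (h : Crv G x y v) : 0 ≤ v := by
  obtain ⟨L, γ, hL, -, -, -, -, rfl⟩ := h
  apply intervalIntegral.integral_nonneg hL
  intro t _
  exact div_nonneg zero_le_one Metric.infDist_nonneg

lemma crv_symm {x y v} (h : Crv G x y v) : Crv G y x v := by
  obtain ⟨L, γ, hL, h1, h2, h3, h4, rfl⟩ := h
  refine ⟨L, fun t => γ (L - t), hL, ?_, by simpa using h3, by simpa using h2, ?_, ?_⟩
  · refine LipschitzWith.of_dist_le_mul fun s t => ?_
    refine (h1.dist_le_mul _ _).trans (le_of_eq ?_)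
    rw [NNReal.coe_one, one_mul, one_mul, Real.dist_eq, Real.dist_eq, abs_sub_comm]
    congr 1; ring
  · intro t ht
    exact h4 _ ⟨by linarith [ht.2], by linarith [ht.1]⟩
  · rw [intervalIntegral.integral_comp_sub_left (fun t => 1 / Metric.infDist (γ t) (frontier G)) L]
    simp

lemma crv_sub {γ : ℝ → EuclideanSpace ℝ (Fin n)} (hγ : LipschitzWith 1 γ) {a b : ℝ} (hab : a ≤ b)
    (h : ∀ t ∈ Set.Icc a b, γ t ∈ G) :
    Crv G (γ a) (γ b) (∫ t in a..b, 1 / Metric.infDist (γ t) (frontier G)) := by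
  refine ⟨b - a, fun t => γ (t + a), by linarith, ?_, by simp, by simp, ?_, ?_⟩
  · refine LipschitzWith.of_dist_le_mul fun s t => ?_
    refine (hγ.dist_le_mul _ _).trans (le_of_eq ?_)
    simp
  · intro t ht
    exact h _ ⟨by linarith [ht.1], by linarith [ht.2]⟩
  · rw [intervalIntegral.integral_comp_add_right (fun t => 1 / Metric.infDist (γ t) (frontier G)) a]
    simp

lemma crv_concat (hf : (frontier G).Nonempty) (hGo : IsOpen G) {x y z v w} (h : Crv G x y v)
    (h' : Crv G y z w) : Crv G x z (v + w) := by
  obtain ⟨L, γ, hL, h1, h2, h3, h4, rfl⟩ := h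
  obtain ⟨L', γ', hL', h1', h2', h3', h4', rfl⟩ := h'
  set Γ : ℝ → EuclideanSpace ℝ (Fin n) := fun t => if t ≤ L then γ t else γ' (t - L) with hΓ
  have e1 : ∀ t, t ≤ L → Γ t = γ t := fun t ht => by simp [hΓ, ht]
  have e2 : ∀ t, L ≤ t → Γ t = γ' (t - L) := fun t ht => by
    rcases eq_or_lt_of_le ht with rfl | ht
    · simp [hΓ, h3, h2']
    · simp [hΓ, not_le.2 ht]
  have key : ∀ s t, s ≤ t → dist (Γ s) (Γ t) ≤ t - s := by
    intro s t hst
    have l1 : ∀ a b, a ≤ b → dist (γ a) (γ b) ≤ b - a := fun a b hab => by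
      have := h1.dist_le_mul a b
      rwa [NNReal.coe_one, one_mul, dist_comm a b, Real.dist_eq, abs_of_nonneg (by linarith)] at this
    have l2 : ∀ a b, a ≤ b → dist (γ' a) (γ' b) ≤ b - a := fun a b hab => by
      have := h1'.dist_le_mul a b
      rwa [NNReal.coe_one, one_mul, dist_comm a b, Real.dist_eq, abs_of_nonneg (by linarith)] at this
    rcases le_total t L with ht | ht
    · rw [e1 t ht, e1 s (hst.trans ht)]; exact l1 _ _ hst
    · rcases le_total s L with hs | hs
      · have a1 := l1 s L hs
        have a2 := l2 0 (t - L) (by linarith)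
        rw [e1 s hs, e2 t ht]
        rw [h3] at a1
        rw [h2'] at a2
        linarith [dist_triangle (γ s) y (γ' (t - L))]
      · rw [e2 s hs, e2 t ht]
        linarith [l2 (s - L) (t - L) (by linarith)]
  have lip : LipschitzWith 1 Γ := by
    refine LipschitzWith.of_dist_le_mul fun s t => ?_
    rw [NNReal.coe_one, one_mul, Real.dist_eq]
    rcases le_total s t with h | h
    · rw [abs_sub_comm, abs_of_nonneg (by linarith)]; exact key s t h
    · rw [abs_of_nonneg (by linarith), dist_comm]; exact key t s h
  have mem : ∀ t ∈ Set.Icc (0:ℝ) (L + L'), Γ t ∈ G := by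
    intro t ht
    rcases le_total t L with h | h
    · rw [e1 t h]; exact h4 _ ⟨ht.1, h⟩
    · rw [e2 t h]; exact h4' _ ⟨by linarith, by linarith [ht.2]⟩
  refine ⟨L + L', Γ, by linarith, lip, by rw [e1 0 hL, h2], ?_, mem, ?_⟩
  · rw [e2 _ (by linarith)]; simp [h3']
  · rw [← intervalIntegral.integral_add_adjacent_intervals (b := L)
      (crv_int hf hGo lip hL (fun t ht => mem t ⟨ht.1, by linarith [ht.2]⟩))
      (crv_int hf hGo lip (by linarith) (fun t ht => mem t ⟨by linarith [ht.1], ht.2⟩))]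
    congr 1
    · apply intervalIntegral.integral_congr
      intro t ht
      rw [Set.uIcc_of_le hL] at ht
      simp only [e1 t ht.2]
    · have : ∫ t in L..(L+L'), 1 / Metric.infDist (Γ t) (frontier G)
          = ∫ t in L..(L+L'), 1 / Metric.infDist (γ' (t - L)) (frontier G) := by
        apply intervalIntegral.integral_congr
        intro t ht
        rw [Set.uIcc_of_le (by linarith)] at ht
        simp only [e2 t ht.1]
      rw [this, intervalIntegral.integral_comp_sub_right
        (fun t => 1 / Metric.infDist (γ' t) (frontier G)) L]
      simp

lemma crv_seg (hf : (frontier G).Nonempty) (hGo : IsOpen G) {a b : EuclideanSpace ℝ (Fin n)}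
    (ha : a ∈ G) (h : dist a b ≤ Metric.infDist a (frontier G) / 2) :
    ∃ v ≤ 1, Crv G a b v := by
  set L := dist a b with hLd
  have hL : 0 ≤ L := dist_nonneg
  set e := L⁻¹ • (b - a) with he
  have hn : ‖e‖ ≤ 1 := by
    rw [he, norm_smul, norm_inv, Real.norm_of_nonneg hL, ← dist_eq_norm, dist_comm, ← hLd]
    exact inv_mul_le_one
  have hLe : L • e = b - a := by
    rw [he]
    rcases eq_or_ne L 0 with h0 | h0
    · have : a = b := dist_eq_zero.1 (hLd ▸ h0)
      simp [this]
    · rw [smul_smul, mul_inv_cancel₀ h0, one_smul]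
  have dpos := dd_pos hf hGo ha
  set γ : ℝ → EuclideanSpace ℝ (Fin n) := fun t => a + t • e with hγ
  have lip : LipschitzWith 1 γ := by
    refine LipschitzWith.of_dist_le_mul fun s t => ?_
    rw [hγ, NNReal.coe_one, one_mul, dist_eq_norm, dist_eq_norm]
    have : a + s • e - (a + t • e) = (s - t) • e := by module
    simp only
    rw [this, norm_smul]
    exact mul_le_of_le_one_right (norm_nonneg _) hn
  have hda : ∀ t ∈ Set.Icc (0:ℝ) L, dist (γ t) a ≤ t := by
    intro t ht
    rw [hγ, dist_eq_norm]
    simp only [add_sub_cancel_left]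
    rw [norm_smul, Real.norm_of_nonneg ht.1]
    exact mul_le_of_le_one_right ht.1 hn
  have mem : ∀ t ∈ Set.Icc (0:ℝ) L, γ t ∈ G := fun t ht =>
    dd_ball hGo ha (by rw [Metric.mem_ball]; linarith [hda t ht, ht.2])
  refine ⟨_, ?_, L, γ, hL, lip, by simp [hγ], by simp [hγ, hLe], mem, rfl⟩
  calc ∫ t in (0:ℝ)..L, 1 / Metric.infDist (γ t) (frontier G)
      ≤ ∫ t in (0:ℝ)..L, 2 / Metric.infDist a (frontier G) := by
        apply intervalIntegral.integral_mono_on hL (crv_int hf hGo lip hL mem) (by simp)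
        intro t ht
        have h1 := dd_lip (G := G) a (γ t)
        have h2 := hda t ht
        rw [dist_comm] at h2
        rw [div_le_div_iff₀ (dd_pos hf hGo (mem t ht)) dpos]
        linarith [ht.2]
    _ ≤ 1 := by
        simp only [intervalIntegral.integral_const, sub_zero, smul_eq_mul]
        rw [mul_div_assoc', div_le_one dpos]; linarith

lemma crv_exists (hf : (frontier G).Nonempty) (hGo : IsOpen G) (hGc : IsConnected G)
    {x y : EuclideanSpace ℝ (Fin n)} (hx : x ∈ G) (hy : y ∈ G) : ∃ v, Crv G x y v := by
  have hpre := hGc.isPreconnected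
  have hsub : G ⊆ {x | x ∈ G ∧ ∃ v, Crv G x y v} := by
    apply hpre.subset_of_closure_inter_subset (u := {x | x ∈ G ∧ ∃ v, Crv G x y v})
    · rw [Metric.isOpen_iff]
      rintro a ⟨ha, v, hv⟩
      have dpos := dd_pos hf hGo ha
      refine ⟨Metric.infDist a (frontier G) / 2, by positivity, fun b hb => ?_⟩
      rw [Metric.mem_ball, dist_comm] at hb
      obtain ⟨w, -, hw⟩ := crv_seg hf hGo ha hb.le
      exact ⟨dd_ball hGo ha (by rw [Metric.mem_ball, dist_comm]; linarith), w + v,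
        crv_concat hf hGo (crv_symm hw) hv⟩
    · obtain ⟨w, -, hw⟩ := crv_seg hf hGo hy (b := y) (by
        rw [dist_self]; linarith [dd_pos hf hGo hy])
      exact ⟨y, hy, hy, w, hw⟩
    · rintro a ⟨hacl, ha⟩
      have dpos := dd_pos hf hGo ha
      rw [Metric.mem_closure_iff] at hacl
      obtain ⟨b, ⟨hb, v, hv⟩, hab⟩ := hacl (Metric.infDist a (frontier G) / 2) (by positivity)
      obtain ⟨w, -, hw⟩ := crv_seg hf hGo ha hab.le
      exact ⟨ha, w + v, crv_concat hf hGo hw hv⟩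
  exact (hsub hx).2

lemma qh_le {x y v} (h : Crv G x y v) : qhDist G x y ≤ v :=
  csInf_le ⟨0, fun _ hw => crv_nonneg hw⟩ h

lemma qh_near (hf : (frontier G).Nonempty) (hGo : IsOpen G) (hGc : IsConnected G)
    {x y : EuclideanSpace ℝ (Fin n)} (hx : x ∈ G) (hy : y ∈ G) {ε : ℝ} (hε : 0 < ε) :
    ∃ v, Crv G x y v ∧ v < qhDist G x y + ε := by
  have := Real.lt_sInf_add_pos (s := {v | Crv G x y v}) (crv_exists hf hGo hGc hx hy) hε
  obtain ⟨v, hv, h⟩ := this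
  exact ⟨v, hv, h⟩

lemma qh_nonneg (hf : (frontier G).Nonempty) (hGo : IsOpen G) (hGc : IsConnected G)
    {x y : EuclideanSpace ℝ (Fin n)} (hx : x ∈ G) (hy : y ∈ G) : 0 ≤ qhDist G x y :=
  le_csInf (crv_exists hf hGo hGc hx hy) fun _ hw => crv_nonneg hw

lemma qh_tri (hf : (frontier G).Nonempty) (hGo : IsOpen G) (hGc : IsConnected G)
    {x y z : EuclideanSpace ℝ (Fin n)} (hy : y ∈ G) (hz : z ∈ G) {v} (h : Crv G x y v) :
    qhDist G x z ≤ v + qhDist G y z := by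
  apply _root_.le_of_forall_pos_le_add
  intro ε hε
  obtain ⟨w, hw, hlt⟩ := qh_near hf hGo hGc hy hz hε
  linarith [qh_le (crv_concat hf hGo h hw)]

/-- local comparability -/
lemma qh_loc (hf : (frontier G).Nonempty) (hGo : IsOpen G) (hGc : IsConnected G)
    {x y z : EuclideanSpace ℝ (Fin n)} (hx : x ∈ G) (hz : z ∈ G)
    (h : dist x y ≤ Metric.infDist x (frontier G) / 2) :
    |qhDist G x z - qhDist G y z| ≤ 1 := by
  have dpos := dd_pos hf hGo hx
  have hy : y ∈ G := dd_ball hGo hx (by rw [Metric.mem_ball, dist_comm]; linarith)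
  obtain ⟨v, hv1, hv⟩ := crv_seg hf hGo hx h
  have h1 := qh_tri hf hGo hGc hy hz hv
  have h2 := qh_tri hf hGo hGc hx hz (crv_symm hv)
  rw [abs_le]; constructor <;> linarith

/-- near-geodesics to the base point -/
lemma qh_geo (hf : (frontier G).Nonempty) (hGo : IsOpen G) (hGc : IsConnected G)
    {x x₀ : EuclideanSpace ℝ (Fin n)} (hx : x ∈ G) (hz : x₀ ∈ G) :
    ∃ (L : ℝ) (γ : ℝ → EuclideanSpace ℝ (Fin n)), 0 ≤ L ∧ LipschitzWith 1 γ ∧ γ 0 = x ∧ γ L = x₀ ∧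
      (∀ t ∈ Set.Icc (0:ℝ) L, γ t ∈ G) ∧
      ∀ s ∈ Set.Icc (0:ℝ) L,
        qhDist G (γ s) x₀ ≤ (∫ t in s..L, 1 / Metric.infDist (γ t) (frontier G)) ∧
        (∫ t in s..L, 1 / Metric.infDist (γ t) (frontier G)) ≤ qhDist G (γ s) x₀ + 1 := by
  obtain ⟨v, ⟨L, γ, hL, h1, h2, h3, h4, rfl⟩, hlt⟩ := qh_near hf hGo hGc hx hz one_pos
  refine ⟨L, γ, hL, h1, h2, h3, h4, fun s hs => ⟨?_, ?_⟩⟩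
  · have := qh_le (crv_sub h1 hs.2 (fun t ht => h4 t ⟨hs.1.trans ht.1, ht.2⟩))
    rwa [h3] at this
  · have c1 := crv_sub h1 hs.1 (fun t ht => h4 t ⟨ht.1, ht.2.trans hs.2⟩)
    rw [h2] at c1
    have := qh_tri hf hGo hGc (h4 s hs) hz c1
    rw [← intervalIntegral.integral_add_adjacent_intervals (b := s)
      (crv_int hf hGo h1 hs.1 (fun t ht => h4 t ⟨ht.1, ht.2.trans hs.2⟩))
      (crv_int hf hGo h1 hs.2 (fun t ht => h4 t ⟨hs.1.trans ht.1, ht.2⟩))] at hlt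
    linarith
end A

open MeasureTheory ENNReal

section B1
variable {f : ℝ → ℝ} {L : ℝ}

lemma oneD_cont (hlip : ∀ s t, f s ≤ f t + |s - t|) : Continuous f := by
  have : LipschitzWith 1 f := by
    refine LipschitzWith.of_dist_le_mul fun s t => ?_
    rw [NNReal.coe_one, one_mul, Real.dist_eq, Real.dist_eq, abs_le]
    have h1 := hlip s t
    have h2 := hlip t s
    rw [abs_sub_comm] at h2
    constructor <;> linarith
  exact this.continuous

lemma oneD_gcont (hpos : ∀ t, 0 < f t) (hlip : ∀ s t, f s ≤ f t + |s - t|) :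
    Continuous (fun t => 1 / f t) :=
  continuous_const.div (oneD_cont hlip) (fun t => (hpos t).ne')

lemma oneD_exp (hpos : ∀ t, 0 < f t) (hlip : ∀ s t, f s ≤ f t + |s - t|) {a b : ℝ} (hab : a ≤ b) :
    f a + (b - a) ≤ f a * Real.exp (∫ t in a..b, 1 / f t) := by
  have h1 : ∫ t in a..b, 1 / (t + (f a - a)) = Real.log ((f a + (b - a)) / f a) := by
    rw [intervalIntegral.integral_comp_add_right (fun t => 1 / t) (f a - a)]
    rw [integral_one_div_of_pos]
    · congr 2 <;> ring
    · linarith [hpos a]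
    · linarith [hpos a]
  have h2 : ∫ t in a..b, 1 / (t + (f a - a)) ≤ ∫ t in a..b, 1 / f t := by
    apply intervalIntegral.integral_mono_on hab
    · apply ContinuousOn.intervalIntegrable_of_Icc hab
      apply ContinuousOn.div continuousOn_const (by fun_prop)
      intro t ht
      have := hpos a
      have := ht.1
      apply ne_of_gt; linarith
    · exact (oneD_gcont hpos hlip).intervalIntegrable _ _
    · intro t ht
      have := hlip t a
      rw [abs_of_nonneg (by linarith [ht.1])] at this
      apply one_div_le_one_div_of_le (hpos t)
      linarith
  rw [h1] at h2
  have hq : 0 < (f a + (b - a)) / f a := by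
    apply div_pos _ (hpos a); linarith [hpos a]
  have h3 := Real.exp_le_exp.2 h2
  rw [Real.exp_log hq, div_le_iff₀ (hpos a)] at h3
  linarith

lemma oneD_deriv (hpos : ∀ t, 0 < f t) (hlip : ∀ s t, f s ≤ f t + |s - t|) (s : ℝ) :
    HasDerivAt (fun s => ∫ t in s..L, 1 / f t) (-(1 / f s)) s := by
  have hc := oneD_gcont hpos hlip
  exact intervalIntegral.integral_hasDerivAt_left (hc.intervalIntegrable _ _)
    (hc.stronglyMeasurableAtFilter _ _) hc.continuousAt

lemma oneD_len (hpos : ∀ t, 0 < f t) (hlip : ∀ s t, f s ≤ f t + |s - t|) {C β : ℝ} (hβ : 0 < β)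
    (hC : 0 < C)
    (h : ∀ s ∈ Set.Icc 0 L, f s ≤ C * Real.exp (-β * ∫ t in s..L, 1 / f t)) :
    ∀ s ∈ Set.Icc 0 L, s ≤ C / β * Real.exp (-β * ∫ t in s..L, 1 / f t) := by
  intro s hs
  set h' : ℝ → ℝ := fun s => C / β * Real.exp (-β * ∫ t in s..L, 1 / f t) - s with hh
  have hd : ∀ s, HasDerivAt h'
      (C / β * (Real.exp (-β * ∫ t in s..L, 1 / f t) * (-β * (-(1 / f s)))) - 1) s := by
    intro s
    exact ((((oneD_deriv hpos hlip s).const_mul (-β)).exp).const_mul (C / β)).sub (hasDerivAt_id s)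
  have hm : MonotoneOn h' (Set.Icc 0 L) := by
    apply monotoneOn_of_deriv_nonneg (convex_Icc _ _)
    · exact fun s _ => (hd s).continuousAt.continuousWithinAt
    · exact fun s _ => (hd s).differentiableAt.differentiableWithinAt
    · intro s hs
      rw [interior_Icc] at hs
      rw [(hd s).deriv]
      have h1 := h s ⟨hs.1.le, hs.2.le⟩
      have h2 := hpos s
      have : C / β * (Real.exp (-β * ∫ t in s..L, 1 / f t) * (-β * (-(1 / f s))))
        = (C * Real.exp (-β * ∫ t in s..L, 1 / f t)) / f s := by
        field_simp
      rw [this, sub_nonneg, le_div_iff₀ h2]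
      linarith
  have := hm ⟨le_rfl, hs.1.trans hs.2⟩ hs hs.1
  simp only [hh] at this
  have h0 : 0 < C / β * Real.exp (-β * ∫ t in (0:ℝ)..L, 1 / f t) := by positivity
  linarith

end B1

section B2
variable {n : ℕ} {G : Set (EuclideanSpace ℝ (Fin n))}

lemma qh_geo' (hf : (frontier G).Nonempty) (hGo : IsOpen G) (hGc : IsConnected G)
    {x x₀ : EuclideanSpace ℝ (Fin n)} (hx : x ∈ G) (hz : x₀ ∈ G) :
    ∃ (L : ℝ) (γ : ℝ → EuclideanSpace ℝ (Fin n)), 0 ≤ L ∧ LipschitzWith 1 γ ∧ γ 0 = x ∧ γ L = x₀ ∧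
      (∀ t, γ t ∈ G) ∧
      ∀ s ∈ Set.Icc (0:ℝ) L,
        qhDist G (γ s) x₀ ≤ (∫ t in s..L, 1 / Metric.infDist (γ t) (frontier G)) ∧
        (∫ t in s..L, 1 / Metric.infDist (γ t) (frontier G)) ≤ qhDist G (γ s) x₀ + 1 := by
  obtain ⟨L, γ, hL, h1, h2, h3, h4, h5⟩ := qh_geo hf hGo hGc hx hz
  have hp : ∀ t ∈ Set.Icc (0:ℝ) L, max 0 (min t L) = t := by
    intro t ht
    rw [min_eq_left ht.2, max_eq_right ht.1]
  have hp' : ∀ t, max 0 (min t L) ∈ Set.Icc (0:ℝ) L := fun t =>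
    ⟨le_max_left _ _, max_le hL (min_le_right _ _)⟩
  refine ⟨L, fun t => γ (max 0 (min t L)), hL, ?_, ?_, ?_, fun t => h4 _ (hp' t), ?_⟩
  · have : LipschitzWith 1 (fun t : ℝ => max 0 (min t L)) :=
      (LipschitzWith.id.min_const L).const_max 0
    have h6 := h1.comp this
    rw [one_mul] at h6
    exact h6
  · simp only [hp 0 ⟨le_rfl, hL⟩, h2]
  · simp only [hp L ⟨hL, le_rfl⟩, h3]
  · intro s hs
    have e : (∫ t in s..L, 1 / Metric.infDist (γ (max 0 (min t L))) (frontier G))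
        = ∫ t in s..L, 1 / Metric.infDist (γ t) (frontier G) := by
      apply intervalIntegral.integral_congr
      intro t ht
      rw [Set.uIcc_of_le hs.2] at ht
      simp only [hp t ⟨hs.1.trans ht.1, ht.2⟩]
    simp only [e, hp s hs]
    exact h5 s hs

lemma exp_tenth : Real.exp (1/10) ≤ 9/8 := by
  have h := Real.add_one_le_exp (-(1/10):ℝ)
  have h2 : Real.exp (1/10) * Real.exp (-(1/10):ℝ) = 1 := by rw [← Real.exp_add]; simp
  have h3 := Real.exp_pos (1/10)
  nlinarith

lemma card_le_of_diff (S : Finset ℕ) (m : ℕ) (h : ∀ a ∈ S, ∀ b ∈ S, b ≤ a + m) :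
    S.card ≤ m + 1 := by
  rcases S.eq_empty_or_nonempty with rfl | hne
  · simp
  · have : S ⊆ Finset.Icc (S.min' hne) (S.min' hne + m) := by
      intro a ha
      rw [Finset.mem_Icc]
      exact ⟨S.min'_le a ha, h _ (S.min'_mem hne) a ha⟩
    calc S.card ≤ _ := Finset.card_le_card this
      _ = m + 1 := by simp; omega

/-- basic information on the near-geodesic curves -/
lemma curve_basic (hf : (frontier G).Nonempty) (hGo : IsOpen G) (hGc : IsConnected G)
    {x₀ : EuclideanSpace ℝ (Fin n)} (hx₀ : x₀ ∈ G) {β c : ℝ} (hβ : 0 < β)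
    (hQ : QHBCWith G β x₀ c) :
    ∃ C₁ > 0, ∀ x ∈ G, ∃ (L : ℝ) (γ : ℝ → EuclideanSpace ℝ (Fin n)), 0 ≤ L ∧
      LipschitzWith 1 γ ∧ γ 0 = x ∧ γ L = x₀ ∧ (∀ t, γ t ∈ G) ∧
      (∀ s ∈ Set.Icc (0:ℝ) L,
        qhDist G (γ s) x₀ ≤ (∫ t in s..L, 1 / Metric.infDist (γ t) (frontier G)) ∧
        (∫ t in s..L, 1 / Metric.infDist (γ t) (frontier G)) ≤ qhDist G (γ s) x₀ + 1) ∧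
      (∀ s ∈ Set.Icc (0:ℝ) L,
        s ≤ C₁ * Real.exp (-β * ∫ t in s..L, 1 / Metric.infDist (γ t) (frontier G))) := by
  refine ⟨Real.exp (β * (c + 1)) / β, by positivity, fun x hx => ?_⟩
  obtain ⟨L, γ, hL, h1, h2, h3, h4, h5⟩ := qh_geo' hf hGo hGc hx hx₀
  refine ⟨L, γ, hL, h1, h2, h3, h4, h5, ?_⟩
  apply oneD_len (f := fun t => Metric.infDist (γ t) (frontier G))
    (fun t => dd_pos hf hGo (h4 t)) _ hβ (by positivity)
  · intro s hs
    have hd := dd_pos hf hGo (h4 s)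
    have a1 := (h5 s hs).2
    have a2 := hQ (γ s) (h4 s)
    rw [one_div (Metric.infDist (γ s) (frontier G)), Real.log_inv] at a2
    set d := Metric.infDist (γ s) (frontier G)
    set T := ∫ t in s..L, 1 / Metric.infDist (γ t) (frontier G)
    rw [← Real.exp_add]
    rw [← Real.log_le_iff_le_exp hd]
    have a3 : T ≤ 1 / β * -Real.log d + c + 1 := by linarith
    have a4 := mul_le_mul_of_nonneg_left a3 hβ.le
    have : β * (1 / β * -Real.log d + c + 1) = - Real.log d + β * (c + 1) := by
      field_simp; ring
    linarith
  · intro s t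
    have b1 := dd_lip (G := G) (γ s) (γ t)
    have b2 := h1.dist_le_mul s t
    rw [NNReal.coe_one, one_mul, Real.dist_eq] at b2
    linarith

end B2

open MeasureTheory ENNReal

section B3
variable {n : ℕ} {G : Set (EuclideanSpace ℝ (Fin n))}

lemma chain_exists (hf : (frontier G).Nonempty) (hGo : IsOpen G) (hGc : IsConnected G)
    {x₀ : EuclideanSpace ℝ (Fin n)} (hx₀ : x₀ ∈ G) {β c : ℝ} (hβ : 0 < β)
    (hQ : QHBCWith G β x₀ c) :
    ∃ C > 0, ∀ x ∈ G, ∃ (N : ℕ) (z : ℕ → EuclideanSpace ℝ (Fin n)), 1 ≤ N ∧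
      z 0 = x ∧ z N = x₀ ∧ (∀ k, z k ∈ G) ∧
      (∀ k < N, dist (z k) (z (k+1)) ≤ Metric.infDist (z k) (frontier G) / 8) ∧
      ((N:ℝ) ≤ C * (1 + |Real.log (Metric.infDist x (frontier G))|)) ∧
      (∀ k, dist x (z k) ≤ C * Metric.infDist (z k) (frontier G) ^ β) ∧
      (∀ w : EuclideanSpace ℝ (Fin n), ∀ S : Finset ℕ, (∀ k ∈ S, k < N ∧
        dist w (z k) < Metric.infDist (z k) (frontier G) / 2) → S.card ≤ 31) := by
  obtain ⟨C₁, hC₁, H⟩ := curve_basic hf hGo hGc hx₀ hβ hQ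
  have hd0 := dd_pos hf hGo hx₀
  set d₀ := Metric.infDist x₀ (frontier G) with hd₀
  refine ⟨max (C₁ / d₀ ^ β) (10 * (1/β) + 10 * |c| + 11), by positivity, fun x hx => ?_⟩
  obtain ⟨L, γ, hL, h1, h2, h3, h4, h5, h6⟩ := H x hx
  set f : ℝ → ℝ := fun t => Metric.infDist (γ t) (frontier G) with hfd
  have hpos : ∀ t, 0 < f t := fun t => dd_pos hf hGo (h4 t)
  have lipd : ∀ s t, dist (γ s) (γ t) ≤ |s - t| := by
    intro s t
    have b2 := h1.dist_le_mul s t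
    rwa [NNReal.coe_one, one_mul, Real.dist_eq] at b2
  have hlip : ∀ s t, f s ≤ f t + |s - t| := by
    intro s t
    have b1 := dd_lip (G := G) (γ s) (γ t)
    have := lipd s t
    simp only [hfd]; linarith
  have hgc := oneD_gcont hpos hlip
  set τ : ℝ → ℝ := fun s => ∫ t in s..L, 1 / f t with hτ
  have hadd : ∀ a b, ∫ t in a..b, 1 / f t = τ a - τ b := by
    intro a b
    have := intervalIntegral.integral_add_adjacent_intervals (a := a) (b := b) (c := L)
      (hgc.intervalIntegrable (μ := volume) _ _) (hgc.intervalIntegrable _ _)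
    simp only [hτ]; linarith
  have hτc : Continuous τ :=
    continuous_iff_continuousAt.2 fun s => (oneD_deriv hpos hlip s).continuousAt
  have hτL : τ L = 0 := by simp [hτ]
  have hord : ∀ a b, τ b ≤ τ a → a ≤ b := by
    intro a b hab
    by_contra! hlt
    have := oneD_exp hpos hlip hlt.le
    rw [hadd] at this
    have h7 : Real.exp (τ b - τ a) ≤ 1 := Real.exp_le_one_iff.2 (by linarith)
    nlinarith [hpos b]
  have hτ0 : ∀ s, s ≤ L → 0 ≤ τ s := by
    intro s hs
    apply intervalIntegral.integral_nonneg hs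
    intro t _
    exact (div_pos one_pos (hpos t)).le
  set V := τ 0 with hV
  have hV0 : 0 ≤ V := hτ0 0 hL
  have hs : ∀ k : ℕ, ∃ s ∈ Set.Icc (0:ℝ) L, τ s = max (V - k / 10) 0 := by
    intro k
    have := intermediate_value_Icc' hL hτc.continuousOn (show max (V - k / 10) 0 ∈ Set.Icc (τ L) (τ 0) by
      rw [hτL]
      refine ⟨le_max_right _ _, max_le ?_ hV0⟩
      have : (0:ℝ) ≤ k := Nat.cast_nonneg k
      linarith)
    obtain ⟨s, hs, h⟩ := this
    exact ⟨s, hs, h⟩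
  choose s hsI hsτ using hs
  set N := ⌊V * 10⌋₊ + 1 with hN
  have hNV : V * 10 < N := by rw [hN]; push_cast; exact Nat.lt_floor_add_one _
  have hNV' : (N:ℝ) ≤ V * 10 + 1 := by
    rw [hN]; push_cast
    linarith [Nat.floor_le (show 0 ≤ V * 10 by positivity)]
  have hs0 : s 0 = 0 := by
    apply le_antisymm _ (hsI 0).1
    apply hord
    rw [hsτ 0]; simp only [Nat.cast_zero, zero_div, sub_zero]; exact le_max_left _ _
  have hsN : s N = L := by
    apply le_antisymm (hsI N).2
    apply hord
    rw [hsτ N, hτL]; apply max_le _ le_rfl; linarith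
  refine ⟨N, fun k => γ (s k), by omega, ?_, ?_, fun k => h4 _, ?_, ?_, ?_, ?_⟩
  · simp only [hs0, h2]
  · simp only [hsN, h3]
  · intro k hk
    have hle : s k ≤ s (k+1) := by
      apply hord; rw [hsτ, hsτ]
      apply max_le_max_right
      push_cast; linarith
    have e := oneD_exp hpos hlip hle
    rw [hadd, hsτ, hsτ] at e
    have e2 : max (V - (k:ℝ) / 10) 0 - max (V - ((k+1 : ℕ):ℝ) / 10) 0 ≤ 1/10 := by
      rw [sub_le_iff_le_add]
      apply max_le
      · have := le_max_left (V - ((k+1 : ℕ):ℝ) / 10) 0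
        push_cast at this ⊢
        linarith
      · have := le_max_right (V - ((k+1 : ℕ):ℝ) / 10) 0
        linarith
    have e3 := (Real.exp_le_exp.2 e2).trans exp_tenth
    have e4 := mul_le_mul_of_nonneg_left e3 (hpos (s k)).le
    have e5 := lipd (s k) (s (k+1))
    rw [abs_sub_comm, abs_of_nonneg (by linarith)] at e5
    have : f (s k) = Metric.infDist (γ (s k)) (frontier G) := rfl
    rw [← this]
    linarith
  · have a1 := (h5 0 ⟨le_rfl, hL⟩).2
    rw [h2] at a1
    have a2 := hQ x hx
    have a3 : V ≤ 1/β * |Real.log (Metric.infDist x (frontier G))| + |c| + 1 := by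
      rw [one_div (Metric.infDist x (frontier G)), Real.log_inv] at a2
      have b1 : 1/β * -Real.log (Metric.infDist x (frontier G))
        ≤ 1/β * |Real.log (Metric.infDist x (frontier G))| :=
          mul_le_mul_of_nonneg_left (neg_le_abs _) (by positivity)
      have b2 := le_abs_self c
      have : V ≤ qhDist G x x₀ + 1 := a1
      linarith
    have a4 : (10 * (1/β) + 10 * |c| + 11) * (1 + |Real.log (Metric.infDist x (frontier G))|)
      ≤ max (C₁ / d₀ ^ β) (10 * (1/β) + 10 * |c| + 11) * (1 + |Real.log (Metric.infDist x (frontier G))|) :=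
      mul_le_mul_of_nonneg_right (le_max_right _ _) (by positivity)
    refine le_trans ?_ a4
    have p1 : 0 ≤ 1/β := by positivity
    have p2 := abs_nonneg (Real.log (Metric.infDist x (frontier G)))
    have p3 := abs_nonneg c
    nlinarith [mul_nonneg p2 p3]
  · intro k
    have a1 := h6 (s k) (hsI k)
    have a2 := lipd 0 (s k)
    rw [h2, zero_sub, abs_neg, abs_of_nonneg (hsI k).1] at a2
    have a3 : f L ≤ f (s k) * Real.exp (τ (s k)) := by
      have := oneD_exp hpos hlip (hsI k).2
      have h8 := hlip L (s k)
      rw [abs_of_nonneg (by linarith [(hsI k).2])] at h8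
      exact h8.trans this
    have a4 : Real.exp (-τ (s k)) ≤ f (s k) / d₀ := by
      have : f L = d₀ := by simp [hfd, h3, hd₀]
      rw [this] at a3
      rw [le_div_iff₀ hd0, Real.exp_neg, inv_mul_le_iff₀ (Real.exp_pos _)]
      linarith
    have a5 : Real.exp (-β * τ (s k)) ≤ (f (s k) / d₀) ^ β := by
      have : Real.exp (-β * τ (s k)) = Real.exp (-τ (s k)) ^ β := by
        rw [← Real.exp_mul]; congr 1; ring
      rw [this]
      exact Real.rpow_le_rpow (Real.exp_pos _).le a4 hβ.le
    rw [Real.div_rpow (hpos _).le hd0.le] at a5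
    calc dist x (γ (s k)) ≤ s k := a2
      _ ≤ C₁ * Real.exp (-β * τ (s k)) := a1
      _ ≤ C₁ * (f (s k) ^ β / d₀ ^ β) := mul_le_mul_of_nonneg_left a5 hC₁.le
      _ = C₁ / d₀ ^ β * f (s k) ^ β := by ring
      _ ≤ _ := mul_le_mul_of_nonneg_right (le_max_left _ _) (Real.rpow_nonneg (hpos _).le _)
  · intro w S hS
    have key : ∀ k ∈ S, qhDist G w x₀ - 1 ≤ V - k / 10 ∧ V - k / 10 ≤ qhDist G w x₀ + 2 := by
      intro k hk
      obtain ⟨hkN, hkd⟩ := hS k hk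
      have hk2 : (k:ℝ) ≤ V * 10 := by
        have : k ≤ ⌊V * 10⌋₊ := by omega
        exact (Nat.le_floor_iff (by positivity)).1 this
      have e : τ (s k) = V - k / 10 := by
        rw [hsτ]; apply max_eq_left; linarith
      rw [dist_comm] at hkd
      have a1 := qh_loc hf hGo hGc (h4 (s k)) hx₀ hkd.le
      have a2 := h5 (s k) (hsI k)
      have a3 : ∫ t in s k..L, 1 / Metric.infDist (γ t) (frontier G) = V - k / 10 := e
      rw [a3] at a2
      rw [abs_le] at a1
      constructor <;> linarith [a1.1, a1.2, a2.1, a2.2]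
    apply card_le_of_diff S 30
    intro a ha b hb
    have := key a ha
    have := key b hb
    have : (b:ℝ) ≤ a + 30 := by linarith
    exact_mod_cast this

/-- sets of points seeing a hole at scale `2^{-j}` -/
def Eset {n : ℕ} (G : Set (EuclideanSpace ℝ (Fin n))) (κ lam : ℝ) (j : ℕ) :
    Set (EuclideanSpace ℝ (Fin n)) :=
  {y | ∃ z ∈ G, κ * (1/2)^j < Metric.infDist z (frontier G) ∧
    Metric.infDist z (frontier G) < 4 * (1/2)^j ∧ dist y z < lam * (1/2)^j}

open Classical in
lemma scales (hf : (frontier G).Nonempty) (hGo : IsOpen G) (hGc : IsConnected G)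
    {x₀ : EuclideanSpace ℝ (Fin n)} (hx₀ : x₀ ∈ G) {β c : ℝ} (hβ : 0 < β)
    (hQ : QHBCWith G β x₀ c) :
    ∃ κ > 0, ∃ C : ℝ, ∀ x ∈ G, ∀ J : ℕ, Metric.infDist x (frontier G) ≤ (1/2)^J →
      (J:ℝ) ≤ C + 2 * ((Finset.range J).filter (fun j => x ∈ Eset G κ 2 j)).card := by
  obtain ⟨C₁, hC₁, H⟩ := curve_basic hf hGo hGc hx₀ hβ hQ
  have hd0 := dd_pos hf hGo hx₀
  set d₀ := Metric.infDist x₀ (frontier G) with hd₀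
  obtain ⟨j₀, hj₀⟩ := exists_pow_lt_of_lt_one (show 0 < d₀ / 2 by positivity) (show (1/2:ℝ) < 1 by norm_num)
  refine ⟨β / 4, by positivity, 2 * j₀ + |Real.log C₁|, fun x hx J hJ => ?_⟩
  set Gd := (Finset.range J).filter (fun j => x ∈ Eset G (β/4) 2 j) with hGd
  rcases le_or_gt J j₀ with hJj | hJj
  · have : (J:ℝ) ≤ j₀ := by exact_mod_cast hJj
    have h1 : (0:ℝ) ≤ Gd.card := Nat.cast_nonneg _
    have h2 : (0:ℝ) ≤ j₀ := Nat.cast_nonneg _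
    linarith [abs_nonneg (Real.log C₁)]
  obtain ⟨L, γ, hL, h1, h2, h3, h4, h5, h6⟩ := H x hx
  set f : ℝ → ℝ := fun t => Metric.infDist (γ t) (frontier G) with hfd
  have hpos : ∀ t, 0 < f t := fun t => dd_pos hf hGo (h4 t)
  have lipd : ∀ s t, dist (γ s) (γ t) ≤ |s - t| := by
    intro s t
    have b2 := h1.dist_le_mul s t
    rwa [NNReal.coe_one, one_mul, Real.dist_eq] at b2
  have hlip : ∀ s t, f s ≤ f t + |s - t| := by
    intro s t
    have b1 := dd_lip (G := G) (γ s) (γ t)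
    have := lipd s t
    simp only [hfd]; linarith
  have hgc := oneD_gcont hpos hlip
  have hhalf : ∀ {i j : ℕ}, i ≤ j → ((1:ℝ)/2)^j ≤ (1/2)^i := fun h =>
    pow_le_pow_of_le_one (by norm_num) (by norm_num) h
  have hLj : (1/2:ℝ)^j₀ ≤ L := by
    have a1 := dd_lip (G := G) x₀ x
    have a2 := lipd L 0
    rw [h2, h3, sub_zero, abs_of_nonneg hL] at a2
    have a3 := hhalf hJj.le
    linarith
  set a : ℕ → ℝ := fun i => ∫ t in ((1:ℝ)/2)^(i+1)..(1/2)^i, 1 / f t with ha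
  -- sum of pieces
  have hsum : ∑ i ∈ Finset.Ico j₀ J, a i ≤ ∫ t in ((1:ℝ)/2)^J..L, 1 / f t := by
    have e : ∑ i ∈ Finset.Ico j₀ J, a i = ∫ t in ((1:ℝ)/2)^J..(1/2)^j₀, 1 / f t := by
      have := intervalIntegral.sum_integral_adjacent_intervals_Ico (μ := volume) (f := fun t => 1 / f t)
        (a := fun i => ((1:ℝ)/2)^i) hJj.le (fun k _ => hgc.intervalIntegrable _ _)
      rw [intervalIntegral.integral_symm, ← this, ← Finset.sum_neg_distrib]
      apply Finset.sum_congr rfl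
      intro i _
      rw [intervalIntegral.integral_symm, neg_neg]
    have := intervalIntegral.integral_add_adjacent_intervals (a := ((1:ℝ)/2)^J) (b := (1/2)^j₀) (c := L)
      (hgc.intervalIntegrable (μ := volume) _ _) (hgc.intervalIntegrable _ _)
    have h0 : 0 ≤ ∫ t in ((1:ℝ)/2)^j₀..L, 1 / f t :=
      intervalIntegral.integral_nonneg hLj fun t _ => (div_pos one_pos (hpos t)).le
    linarith
  have ha0 : ∀ i, 0 ≤ a i := fun i =>
    intervalIntegral.integral_nonneg (hhalf (Nat.le_succ i)) fun t _ => (div_pos one_pos (hpos t)).le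
  -- bad scales
  have hbad : ∀ i ∈ Finset.Ico j₀ J, i ∉ Gd → 2 / β ≤ a i := by
    intro i hi hiG
    rw [Finset.mem_Ico] at hi
    have hfs : ∀ s ∈ Set.Icc (((1:ℝ)/2)^(i+1)) ((1/2)^i), f s ≤ β/4 * (1/2)^i := by
      intro s hs
      by_contra! hcon
      apply hiG
      rw [hGd, Finset.mem_filter, Finset.mem_range]
      have hs0 : 0 ≤ s := le_trans (by positivity) hs.1
      have b1 := lipd 0 s
      rw [h2, zero_sub, abs_neg, abs_of_nonneg hs0] at b1
      have b2 := hlip s 0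
      rw [sub_zero, abs_of_nonneg hs0] at b2
      have b3 : f 0 ≤ (1/2)^J := by simpa [hfd, h2] using hJ
      have b4 := hhalf hi.2.le
      have b5 : (0:ℝ) < (1/2)^i := by positivity
      refine ⟨hi.2, γ s, h4 s, hcon, ?_, ?_⟩
      · have : f s < 4 * (1/2)^i := by linarith [hs.2]
        exact this
      · linarith [hs.2]
    have b5 : (0:ℝ) < (1/2)^i := by positivity
    calc 2 / β = ∫ t in ((1:ℝ)/2)^(i+1)..(1/2)^i, 1 / (β/4 * (1/2)^i) := by
          rw [intervalIntegral.integral_const, smul_eq_mul, pow_succ]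
          field_simp; ring
      _ ≤ a i := by
        apply intervalIntegral.integral_mono_on (hhalf (Nat.le_succ i)) (by simp)
          (hgc.intervalIntegrable _ _)
        intro t ht
        exact one_div_le_one_div_of_le (hpos t) (hfs t ht)
  have hcard : ((J:ℝ) - j₀ - Gd.card) * (2/β) ≤ ∫ t in ((1:ℝ)/2)^J..L, 1 / f t := by
    have c1 : (((Finset.Ico j₀ J) \ Gd).card : ℝ) * (2/β) ≤ ∑ i ∈ Finset.Ico j₀ J, a i := by
      calc (((Finset.Ico j₀ J) \ Gd).card : ℝ) * (2/β) = ∑ i ∈ (Finset.Ico j₀ J) \ Gd, 2/β := by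
            rw [Finset.sum_const, nsmul_eq_mul]
        _ ≤ ∑ i ∈ (Finset.Ico j₀ J) \ Gd, a i := by
            apply Finset.sum_le_sum
            intro i hi
            rw [Finset.mem_sdiff] at hi
            exact hbad i hi.1 hi.2
        _ ≤ _ := Finset.sum_le_sum_of_subset_of_nonneg Finset.sdiff_subset fun i _ _ => ha0 i
    have c2 : (J:ℝ) - j₀ - Gd.card ≤ ((Finset.Ico j₀ J) \ Gd).card := by
      have := Finset.le_card_sdiff Gd (Finset.Ico j₀ J)
      rw [Nat.card_Ico] at this
      have h' : J ≤ ((Finset.Ico j₀ J) \ Gd).card + Gd.card + j₀ := by omega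
      have : (J:ℝ) ≤ ((Finset.Ico j₀ J) \ Gd).card + Gd.card + j₀ := by exact_mod_cast h'
      linarith
    have := mul_le_mul_of_nonneg_right c2 (show 0 ≤ 2/β by positivity)
    linarith
  have hJL : ((1:ℝ)/2)^J ≤ L := (hhalf hJj.le).trans hLj
  have hT := h6 (((1:ℝ)/2)^J) ⟨by positivity, hJL⟩
  have hT2 : β * (∫ t in ((1:ℝ)/2)^J..L, 1 / f t) ≤ Real.log C₁ + J * Real.log 2 := by
    have e1 := Real.log_le_log (by positivity) hT
    rw [Real.log_mul hC₁.ne' (Real.exp_pos _).ne', Real.log_exp, Real.log_pow, one_div, Real.log_inv] at e1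
    simp only [hfd]
    linarith
  have hT3 : Real.log 2 < 1 := by
    have := Real.log_two_lt_d9; linarith
  have hfin : 2 * ((J:ℝ) - j₀ - Gd.card) ≤ Real.log C₁ + J * Real.log 2 := by
    have := mul_le_mul_of_nonneg_left hcard hβ.le
    have e : β * (((J:ℝ) - j₀ - Gd.card) * (2/β)) = 2 * ((J:ℝ) - j₀ - Gd.card) := by
      field_simp
    linarith
  have hJ0 : (0:ℝ) ≤ J := Nat.cast_nonneg _
  nlinarith [le_abs_self (Real.log C₁)]

end B3

open MeasureTheory ENNReal

section C
variable {n : ℕ} {G : Set (EuclideanSpace ℝ (Fin n))}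

lemma Eset_open (κ lam : ℝ) (j : ℕ) : IsOpen (Eset G κ lam j) := by
  have : Eset G κ lam j = ⋃ z ∈ {z | z ∈ G ∧ κ * (1/2)^j < Metric.infDist z (frontier G) ∧
    Metric.infDist z (frontier G) < 4 * (1/2)^j}, Metric.ball z (lam * (1/2)^j) := by
    ext y
    simp only [Eset, Set.mem_setOf_eq, Set.mem_iUnion, Metric.mem_ball, exists_prop, and_assoc]
  rw [this]
  exact isOpen_biUnion fun _ _ => Metric.isOpen_ball

noncomputable def cnt {n : ℕ} (G : Set (EuclideanSpace ℝ (Fin n))) (κ lam : ℝ) (J : ℕ)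
    (y : EuclideanSpace ℝ (Fin n)) : ℕ :=
  ∑ j ∈ Finset.range J, (Eset G κ lam j).indicator (fun _ => (1:ℕ)) y

def Gset {n : ℕ} (G : Set (EuclideanSpace ℝ (Fin n))) (κ : ℝ) (j : ℕ) :
    Set (EuclideanSpace ℝ (Fin n)) :=
  {x | x ∈ G ∧ κ / 2 * (1/2)^j < Metric.infDist x (frontier G) ∧
    Metric.infDist x (frontier G) < 8 * (1/2)^j}

lemma Gset_meas (hGo : IsOpen G) (κ : ℝ) (j : ℕ) : MeasurableSet (Gset G κ j) := by
  have hc : Continuous fun x => Metric.infDist x (frontier G) := Metric.continuous_infDist_pt _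
  exact (hGo.inter ((isOpen_lt continuous_const hc).inter (isOpen_lt hc continuous_const))).measurableSet

lemma cnt_meas (κ lam : ℝ) (J : ℕ) :
    Measurable (fun y => ((cnt G κ lam J y : ℕ) : ℝ≥0∞)) := by
  have : Measurable (cnt G κ lam J) := by
    unfold cnt
    apply Finset.measurable_sum
    intro j _
    exact measurable_const.indicator (Eset_open κ lam j).measurableSet
  exact (measurable_from_top (f := fun n : ℕ => (n : ℝ≥0∞))).comp this

lemma cnt_succ (κ lam : ℝ) (J : ℕ) (y : EuclideanSpace ℝ (Fin n)) :
    cnt G κ lam (J+1) y = cnt G κ lam J y + (Eset G κ lam J).indicator (fun _ => (1:ℕ)) y := by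
  rw [cnt, Finset.sum_range_succ]; rfl

lemma cnt_mono (κ lam : ℝ) (y : EuclideanSpace ℝ (Fin n)) : Monotone (fun J => cnt G κ lam J y) := by
  apply monotone_nat_of_le_succ
  intro J; rw [cnt_succ]; omega

lemma nat_pow_aux (s M : ℕ) : (s+1)^(M+1) ≤ s^(M+1) + (M+1) * (s+1)^M := by
  induction M with
  | zero => simp
  | succ M ih =>
    calc (s+1)^(M+1+1) = s * (s+1)^(M+1) + (s+1)^(M+1) := by ring
      _ ≤ s * (s^(M+1) + (M+1) * (s+1)^M) + (s+1)^(M+1) := by gcongr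
      _ = s^(M+1+1) + (M+1) * (s * (s+1)^M) + (s+1)^(M+1) := by ring
      _ ≤ s^(M+1+1) + (M+1) * ((s+1) * (s+1)^M) + (s+1)^(M+1) := by gcongr; omega
      _ = _ := by ring

lemma cnt_pow (κ lam : ℝ) (M J : ℕ) (y : EuclideanSpace ℝ (Fin n)) :
    (cnt G κ lam J y)^(M+1) ≤ (M+1) * ∑ j ∈ Finset.range J,
      (Eset G κ lam j).indicator (fun _ => (cnt G κ lam (j+1) y)^M) y := by
  induction J with
  | zero => simp [cnt]
  | succ J ih =>
    rw [Finset.sum_range_succ, mul_add]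
    by_cases h : y ∈ Eset G κ lam J
    · have e : cnt G κ lam (J+1) y = cnt G κ lam J y + 1 := by
        rw [cnt_succ, Set.indicator_of_mem h]
      rw [Set.indicator_of_mem h, e]
      have := nat_pow_aux (cnt G κ lam J y) M
      omega
    · have e : cnt G κ lam (J+1) y = cnt G κ lam J y := by
        rw [cnt_succ, Set.indicator_of_notMem h, add_zero]
      rw [Set.indicator_of_notMem h, e]
      simpa using ih

lemma cnt_shift (κ : ℝ) {lam : ℝ} (hlam : 0 < lam) {j : ℕ} {x y : EuclideanSpace ℝ (Fin n)}
    (h : dist x y < (lam + 2) * (1/2)^j) :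
    cnt G κ lam (j+1) y ≤ cnt G κ (2 * lam + 2) (j+1) x := by
  unfold cnt
  apply Finset.sum_le_sum
  intro i hi
  rw [Finset.mem_range] at hi
  by_cases hy : y ∈ Eset G κ lam i
  · rw [Set.indicator_of_mem hy]
    obtain ⟨z, hz, h1, h2, h3⟩ := hy
    have hx : x ∈ Eset G κ (2 * lam + 2) i := by
      refine ⟨z, hz, h1, h2, ?_⟩
      have hp : ((1:ℝ)/2)^j ≤ (1/2)^i := pow_le_pow_of_le_one (by norm_num) (by norm_num) (by omega)
      have := dist_triangle x y z
      nlinarith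
    rw [Set.indicator_of_mem hx]
  · rw [Set.indicator_of_notMem hy]; exact Nat.zero_le _

lemma vol_ball (hn : 2 ≤ n) (x : EuclideanSpace ℝ (Fin n)) {r : ℝ} (hr : 0 ≤ r) :
    volume (Metric.ball x r) = ENNReal.ofReal r ^ n *
      volume (Metric.ball (0 : EuclideanSpace ℝ (Fin n)) 1) := by
  have : Nonempty (Fin n) := ⟨⟨0, by omega⟩⟩
  rw [Measure.addHaar_ball _ _ hr, finrank_euclideanSpace, Fintype.card_fin,
    ENNReal.ofReal_pow hr]

lemma vol_ball_pos (x : EuclideanSpace ℝ (Fin n)) {r : ℝ} (hr : 0 < r) :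
    0 < volume (Metric.ball x r) := Metric.measure_ball_pos _ _ hr

lemma transfer (hn : 2 ≤ n) (hGo : IsOpen G) {κ lam : ℝ} (hκ : 0 < κ) (hlam : 0 < lam) (j : ℕ)
    {h h' : EuclideanSpace ℝ (Fin n) → ℝ≥0∞} (hm' : Measurable h')
    (H : ∀ x y, dist x y < (lam + 2) * (1/2)^j → h y ≤ h' x) :
    ∫⁻ y in Eset G κ lam j, h y ≤
      ENNReal.ofReal ((lam + 2) / (κ / 2)) ^ n * ∫⁻ x in Gset G κ j, h' x := by
  set ρ := (lam + 2) * ((1:ℝ)/2)^j with hρ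
  set r := κ / 2 * ((1:ℝ)/2)^j with hr
  have hρ0 : 0 < ρ := by positivity
  have hr0 : 0 < r := by positivity
  set v := volume (Metric.ball (0 : EuclideanSpace ℝ (Fin n)) 1) with hv
  have hv0 : v ≠ 0 := (vol_ball_pos _ one_pos).ne'
  have hvt : v ≠ ∞ := Metric.isBounded_ball.measure_lt_top.ne
  -- pointwise
  have pt : ∀ y ∈ Eset G κ lam j, h y * (ENNReal.ofReal r ^ n * v) ≤
      ∫⁻ x in Gset G κ j, (Metric.ball y ρ).indicator h' x := by
    rintro y ⟨z, hz, h1, h2, h3⟩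
    have hp : (0:ℝ) < (1/2)^j := by positivity
    have hκ4 : κ < 4 := by
      have := h1.trans h2
      exact lt_of_mul_lt_mul_right this hp.le
    have hsub : Metric.ball z r ⊆ Gset G κ j ∩ Metric.ball y ρ := by
      intro x hx
      rw [Metric.mem_ball] at hx
      have b1 := dd_lip (G := G) z x
      have b2 := dd_lip (G := G) x z
      rw [dist_comm] at b1
      refine ⟨⟨dd_ball hGo hz (by rw [Metric.mem_ball]; linarith), by linarith, by nlinarith⟩, ?_⟩
      rw [Metric.mem_ball]
      have := dist_triangle x z y
      rw [dist_comm z y] at this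
      nlinarith
    calc h y * (ENNReal.ofReal r ^ n * v) = ∫⁻ x in Metric.ball z r, h y := by
          rw [setLIntegral_const, vol_ball hn z hr0.le]
      _ ≤ ∫⁻ x in Metric.ball z r, (Metric.ball y ρ).indicator h' x := by
          apply setLIntegral_mono' Metric.isOpen_ball.measurableSet
          intro x hx
          have hx2 := (hsub hx).2
          rw [Set.indicator_of_mem hx2]
          exact H x y hx2
      _ ≤ _ := lintegral_mono_set (fun x hx => (hsub hx).1)
  have main : (∫⁻ y in Eset G κ lam j, h y) * (ENNReal.ofReal r ^ n * v) ≤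
      (ENNReal.ofReal ρ ^ n * v) * ∫⁻ x in Gset G κ j, h' x := by
    have hct : ENNReal.ofReal r ^ n * v ≠ ∞ := ENNReal.mul_ne_top (by finiteness) hvt
    rw [← lintegral_mul_const' _ _ hct]
    calc ∫⁻ y in Eset G κ lam j, h y * (ENNReal.ofReal r ^ n * v)
        ≤ ∫⁻ y in Eset G κ lam j, ∫⁻ x in Gset G κ j, (Metric.ball y ρ).indicator h' x :=
          setLIntegral_mono' (Eset_open _ _ _).measurableSet pt
      _ ≤ ∫⁻ y, ∫⁻ x in Gset G κ j, (Metric.ball y ρ).indicator h' x := setLIntegral_le_lintegral _ _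
      _ = ∫⁻ x in Gset G κ j, ∫⁻ y, (Metric.ball y ρ).indicator h' x := by
          apply lintegral_lintegral_swap
          apply Measurable.aemeasurable
          have : (Function.uncurry fun y x : EuclideanSpace ℝ (Fin n) => (Metric.ball y ρ).indicator h' x)
            = {q : EuclideanSpace ℝ (Fin n) × EuclideanSpace ℝ (Fin n) | dist q.2 q.1 < ρ}.indicator
              (fun q => h' q.2) := by
            ext q
            simp only [Function.uncurry, Set.indicator, Metric.mem_ball, Set.mem_setOf_eq]
          rw [this]
          apply (hm'.comp measurable_snd).indicator
          exact (isOpen_lt (continuous_snd.dist continuous_fst) continuous_const).measurableSet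
      _ = ∫⁻ x in Gset G κ j, (ENNReal.ofReal ρ ^ n * v) * h' x := by
          apply lintegral_congr
          intro x
          have : ∀ y, (Metric.ball y ρ).indicator h' x = (Metric.ball x ρ).indicator (fun _ => h' x) y := by
            intro y
            simp only [Set.indicator, Metric.mem_ball, dist_comm]
          simp_rw [this]
          rw [lintegral_indicator Metric.isOpen_ball.measurableSet, setLIntegral_const,
            vol_ball hn x hρ0.le, mul_comm]
      _ = _ := lintegral_const_mul _ hm'
  have e : ENNReal.ofReal ρ = ENNReal.ofReal ((lam + 2) / (κ / 2)) * ENNReal.ofReal r := by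
    rw [← ENNReal.ofReal_mul (by positivity)]
    congr 1
    rw [hρ, hr]; field_simp
  have hr1 : ENNReal.ofReal r ^ n * v ≠ 0 := by
    apply mul_ne_zero _ hv0
    apply pow_ne_zero
    simpa using hr0
  have hr2 : ENNReal.ofReal r ^ n * v ≠ ∞ := ENNReal.mul_ne_top (by finiteness) hvt
  rw [← ENNReal.mul_le_mul_iff_left hr1 hr2]
  refine main.trans (le_of_eq ?_)
  rw [e, mul_pow]; ring

lemma Gset_overlap {κ : ℝ} (hκ : 0 < κ) : ∃ K : ℕ, ∀ J : ℕ, ∀ x : EuclideanSpace ℝ (Fin n),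
    ∑ j ∈ Finset.range J, (Gset G κ j).indicator (fun _ => (1:ℝ≥0∞)) x ≤ K := by
  classical
  obtain ⟨m, hm⟩ := pow_unbounded_of_one_lt (16 / κ) (show (1:ℝ) < 2 by norm_num)
  refine ⟨m + 1, fun J x => ?_⟩
  have e : ∑ j ∈ Finset.range J, (Gset G κ j).indicator (fun _ => (1:ℝ≥0∞)) x
      = (((Finset.range J).filter (fun j => x ∈ Gset G κ j)).card : ℝ≥0∞) := by
    simp only [Set.indicator_apply]
    rw [Finset.sum_boole]
  rw [e]
  have : ((Finset.range J).filter (fun j => x ∈ Gset G κ j)).card ≤ m + 1 := by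
    apply card_le_of_diff
    intro a ha b hb
    rw [Finset.mem_filter] at ha hb
    obtain ⟨-, -, ha1, -⟩ := ha
    obtain ⟨-, -, -, hb2⟩ := hb
    by_contra! hlt
    have h1 : ((1:ℝ)/2)^b ≤ (1/2)^(a+m) := pow_le_pow_of_le_one (by norm_num) (by norm_num) hlt.le
    rw [pow_add] at h1
    have h2 := ha1.trans hb2
    have h3 : (0:ℝ) < (1/2)^a := by positivity
    have h4 : ((1:ℝ)/2)^m * 2^m = 1 := by rw [← mul_pow]; norm_num
    have h5 : (0:ℝ) < (1/2)^m := by positivity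
    rw [div_lt_iff₀ hκ] at hm
    have h6 : κ / 2 * (1/2)^a < (8 * (1/2)^m) * (1/2)^a := by nlinarith
    have h7 := lt_of_mul_lt_mul_right h6 h3.le
    nlinarith
  exact_mod_cast this

lemma moments (hn : 2 ≤ n) (hGo : IsOpen G) (hGb : Bornology.IsBounded G) {κ : ℝ} (hκ : 0 < κ)
    (M : ℕ) : ∀ lam > 0, ∃ C : ℝ≥0∞, C ≠ ∞ ∧ ∀ J : ℕ,
      ∫⁻ x in G, (cnt G κ lam J x : ℝ≥0∞)^M ≤ C := by
  induction M with
  | zero =>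
    intro lam _
    refine ⟨volume G, hGb.measure_lt_top.ne, fun J => ?_⟩
    simp
  | succ M ih =>
    intro lam hlam
    obtain ⟨C, hC, hJ⟩ := ih (2 * lam + 2) (by positivity)
    obtain ⟨K, hK⟩ := Gset_overlap (n := n) (G := G) hκ
    refine ⟨(M+1 : ℕ) * (ENNReal.ofReal ((lam + 2) / (κ / 2)) ^ n * (K * C)), ?_, fun J => ?_⟩
    · exact ENNReal.mul_ne_top (by finiteness) (ENNReal.mul_ne_top (by finiteness)
        (ENNReal.mul_ne_top (by finiteness) hC))
    have hpw : ∀ x, (cnt G κ lam J x : ℝ≥0∞)^(M+1) ≤ (M+1 : ℕ) * ∑ j ∈ Finset.range J,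
        (Eset G κ lam j).indicator (fun x => (cnt G κ lam (j+1) x : ℝ≥0∞)^M) x := by
      intro x
      have := cnt_pow (G := G) κ lam M J x
      have h2 : (((cnt G κ lam J x)^(M+1) : ℕ) : ℝ≥0∞) ≤ (((M+1) * ∑ j ∈ Finset.range J,
        (Eset G κ lam j).indicator (fun _ => (cnt G κ lam (j+1) x)^M) x : ℕ) : ℝ≥0∞) := by
        exact_mod_cast this
      rw [Nat.cast_pow, Nat.cast_mul, Nat.cast_sum] at h2
      refine h2.trans (le_of_eq ?_)
      congr 1
      apply Finset.sum_congr rfl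
      intro j _
      by_cases hx : x ∈ Eset G κ lam j <;> simp [hx]
    calc ∫⁻ x in G, (cnt G κ lam J x : ℝ≥0∞)^(M+1)
        ≤ ∫⁻ x, (cnt G κ lam J x : ℝ≥0∞)^(M+1) := setLIntegral_le_lintegral _ _
      _ ≤ ∫⁻ x, (M+1 : ℕ) * ∑ j ∈ Finset.range J,
        (Eset G κ lam j).indicator (fun x => (cnt G κ lam (j+1) x : ℝ≥0∞)^M) x := lintegral_mono hpw
      _ = (M+1 : ℕ) * ∑ j ∈ Finset.range J, ∫⁻ x in Eset G κ lam j, (cnt G κ lam (j+1) x : ℝ≥0∞)^M := by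
        have hmm : ∀ j, Measurable ((Eset G κ lam j).indicator
            (fun x => (cnt G κ lam (j+1) x : ℝ≥0∞)^M)) := fun j =>
          ((cnt_meas κ lam (j+1)).pow_const M).indicator (Eset_open κ lam j).measurableSet
        rw [lintegral_const_mul _ (Finset.measurable_sum _ fun j _ => hmm j),
          lintegral_finsetSum _ (fun j _ => hmm j)]
        congr 1
        apply Finset.sum_congr rfl
        intro j _
        rw [lintegral_indicator (Eset_open κ lam j).measurableSet]
      _ ≤ (M+1 : ℕ) * ∑ j ∈ Finset.range J, ENNReal.ofReal ((lam + 2) / (κ / 2)) ^ n *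
          ∫⁻ x in Gset G κ j, (cnt G κ (2 * lam + 2) J x : ℝ≥0∞)^M := by
        gcongr with j hj
        apply transfer hn hGo hκ hlam j ((cnt_meas κ _ J).pow_const M)
        intro x y hxy
        have h1 := cnt_shift (G := G) κ hlam hxy
        have h2 := cnt_mono (G := G) κ (2 * lam + 2) x (Finset.mem_range.1 hj)
        have : cnt G κ lam (j+1) y ≤ cnt G κ (2 * lam + 2) J x := h1.trans h2
        gcongr
      _ = (M+1 : ℕ) * (ENNReal.ofReal ((lam + 2) / (κ / 2)) ^ n * ∫⁻ x in G,
            (∑ j ∈ Finset.range J, (Gset G κ j).indicator (fun _ => (1:ℝ≥0∞)) x) *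
              (cnt G κ (2 * lam + 2) J x : ℝ≥0∞)^M) := by
        rw [← Finset.mul_sum]
        congr 2
        simp_rw [Finset.sum_mul]
        rw [lintegral_finsetSum]
        · apply Finset.sum_congr rfl
          intro j _
          have : ∀ x, (Gset G κ j).indicator (fun _ => (1:ℝ≥0∞)) x * (cnt G κ (2 * lam + 2) J x : ℝ≥0∞)^M
            = (Gset G κ j).indicator (fun x => (cnt G κ (2 * lam + 2) J x : ℝ≥0∞)^M) x := by
            intro x
            by_cases hx : x ∈ Gset G κ j <;> simp [hx]
          simp_rw [this]
          rw [lintegral_indicator (Gset_meas hGo κ j), Measure.restrict_restrict (Gset_meas hGo κ j)]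
          congr 2
          symm
          rw [Set.inter_eq_left]
          exact fun x hx => hx.1
        · intro j _
          exact (measurable_const.indicator (Gset_meas hGo κ j)).mul ((cnt_meas κ _ J).pow_const M)
      _ ≤ (M+1 : ℕ) * (ENNReal.ofReal ((lam + 2) / (κ / 2)) ^ n * ∫⁻ x in G,
            K * (cnt G κ (2 * lam + 2) J x : ℝ≥0∞)^M) := by
        gcongr with x
        exact hK J x
      _ = (M+1 : ℕ) * (ENNReal.ofReal ((lam + 2) / (κ / 2)) ^ n * (K * ∫⁻ x in G,
            (cnt G κ (2 * lam + 2) J x : ℝ≥0∞)^M)) := by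
        rw [lintegral_const_mul _ ((cnt_meas κ _ J).pow_const M)]
      _ ≤ _ := by gcongr; exact hJ J

lemma logmoment (hn : 2 ≤ n) (hf : (frontier G).Nonempty) (hGo : IsOpen G) (hGc : IsConnected G)
    (hGb : Bornology.IsBounded G)
    {x₀ : EuclideanSpace ℝ (Fin n)} (hx₀ : x₀ ∈ G) {β c : ℝ} (hβ : 0 < β)
    (hQ : QHBCWith G β x₀ c) (s : ℝ) :
    ∫⁻ x in G, ENNReal.ofReal ((1 + |Real.log (Metric.infDist x (frontier G))|)^s) ≠ ∞ := by
  classical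
  obtain ⟨κ, hκ, C, H⟩ := scales hf hGo hGc hx₀ hβ hQ
  obtain ⟨D, hD, hDG⟩ := dd_bdd hf hGb
  set M := ⌈s⌉₊ with hM
  obtain ⟨B, hB, HB⟩ := moments hn hGo hGb hκ M 2 two_pos
  have hpt : ∀ x ∈ G, ENNReal.ofReal ((1 + |Real.log (Metric.infDist x (frontier G))|)^s) ≤
      2 ^ M * (ENNReal.ofReal (2 + |C| + D) ^ M + 2 ^ M * ⨆ J, (cnt G κ 2 J x : ℝ≥0∞)^M) := by
    intro x hx
    have hd := dd_pos hf hGo hx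
    have h1 : (1 + |Real.log (Metric.infDist x (frontier G))|)^s ≤
      (1 + |Real.log (Metric.infDist x (frontier G))|)^M := by
      rw [← Real.rpow_natCast]
      apply Real.rpow_le_rpow_of_exponent_le
      · linarith [abs_nonneg (Real.log (Metric.infDist x (frontier G)))]
      · exact Nat.le_ceil s
    have h2 : ∃ J, 1 + |Real.log (Metric.infDist x (frontier G))| ≤ (2 + |C| + D) + 2 * cnt G κ 2 J x := by
      rcases le_or_gt (Metric.infDist x (frontier G)) 1 with h | h
      · obtain ⟨J, hJ1, hJ2⟩ := exists_nat_pow_near_of_lt_one hd h (show (0:ℝ) < 1/2 by norm_num) (by norm_num)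
        refine ⟨J, ?_⟩
        have a1 := H x hx J hJ2
        have a2 : ((Finset.range J).filter (fun j => x ∈ Eset G κ 2 j)).card = cnt G κ 2 J x := by
          unfold cnt
          simp only [Set.indicator_apply]
          rw [Finset.card_filter]
        rw [a2] at a1
        have a3 := Real.log_le_log (by positivity) hJ1.le
        rw [Real.log_pow, one_div, Real.log_inv] at a3
        have a4 := Real.log_two_lt_d9
        have a5 := Real.log_two_gt_d9
        rw [abs_of_nonpos (Real.log_nonpos hd.le h)]
        push_cast at a3
        have a6 : (0:ℝ) ≤ J := Nat.cast_nonneg J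
        have a7 := le_abs_self C
        nlinarith
      · refine ⟨0, ?_⟩
        rw [abs_of_nonneg (Real.log_nonneg h.le)]
        have a1 := Real.log_le_sub_one_of_pos hd
        have a2 := hDG x hx
        have a3 := abs_nonneg C
        have a4 : (0:ℝ) ≤ cnt G κ 2 0 x := Nat.cast_nonneg _
        linarith
    obtain ⟨J, hJ⟩ := h2
    calc ENNReal.ofReal ((1 + |Real.log (Metric.infDist x (frontier G))|)^s)
        ≤ ENNReal.ofReal (((2 + |C| + D) + 2 * cnt G κ 2 J x)^M) := by
          apply ENNReal.ofReal_le_ofReal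
          refine h1.trans ?_
          gcongr
      _ = (ENNReal.ofReal (2 + |C| + D) + 2 * cnt G κ 2 J x)^M := by
          rw [ENNReal.ofReal_pow (by positivity), ENNReal.ofReal_add (by positivity) (by positivity),
            ENNReal.ofReal_mul (by positivity), ENNReal.ofReal_natCast, ENNReal.ofReal_ofNat]
      _ ≤ 2 ^ M * (ENNReal.ofReal (2 + |C| + D) ^ M + (2 * (cnt G κ 2 J x : ℝ≥0∞)) ^ M) := by
          set a := ENNReal.ofReal (2 + |C| + D)
          set b := 2 * (cnt G κ 2 J x : ℝ≥0∞)
          calc (a + b)^M ≤ (2 * max a b)^M := by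
                gcongr
                rw [two_mul]
                exact add_le_add (le_max_left _ _) (le_max_right _ _)
            _ = 2^M * (max a b)^M := mul_pow _ _ _
            _ ≤ 2^M * (a^M + b^M) := by
                gcongr
                rcases le_total a b with h | h
                · rw [max_eq_right h]; exact le_add_self
                · rw [max_eq_left h]; exact le_self_add
      _ ≤ _ := by
          rw [mul_pow 2]
          gcongr
          exact le_iSup (fun J => (cnt G κ 2 J x : ℝ≥0∞)^M) J
  have hsup : ∫⁻ x in G, ⨆ J, (cnt G κ 2 J x : ℝ≥0∞)^M ≤ B := by
    rw [lintegral_iSup]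
    · exact iSup_le HB
    · exact fun J => (cnt_meas κ 2 J).pow_const M
    · intro i j hij x
      have := cnt_mono (G := G) κ 2 x hij
      simp only at this ⊢
      gcongr
  have hmeas : Measurable fun x => ⨆ J, (cnt G κ 2 J x : ℝ≥0∞)^M :=
    Measurable.iSup fun J => (cnt_meas κ 2 J).pow_const M
  have : ∫⁻ x in G, ENNReal.ofReal ((1 + |Real.log (Metric.infDist x (frontier G))|)^s) ≤
      2 ^ M * (ENNReal.ofReal (2 + |C| + D) ^ M * volume G + 2 ^ M * B) := by
    calc _ ≤ ∫⁻ x in G, 2 ^ M * (ENNReal.ofReal (2 + |C| + D) ^ M + 2 ^ M * ⨆ J, (cnt G κ 2 J x : ℝ≥0∞)^M) :=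
          setLIntegral_mono' hGo.measurableSet hpt
      _ = 2 ^ M * (ENNReal.ofReal (2 + |C| + D) ^ M * volume G +
            2 ^ M * ∫⁻ x in G, ⨆ J, (cnt G κ 2 J x : ℝ≥0∞)^M) := by
          rw [lintegral_const_mul' _ _ (by finiteness),
            lintegral_add_left measurable_const, setLIntegral_const, lintegral_const_mul _ hmeas]
      _ ≤ _ := by gcongr
  refine ne_top_of_le_ne_top ?_ this
  have := hGb.measure_lt_top (μ := volume)
  exact ENNReal.mul_ne_top (by finiteness) (ENNReal.add_ne_top.2
    ⟨ENNReal.mul_ne_top (by finiteness) this.ne, ENNReal.mul_ne_top (by finiteness) hB⟩)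

end C

open MeasureTheory ENNReal

section D

lemma jensen_lint {α : Type*} [MeasurableSpace α] (ν : Measure α) (f : α → ℝ≥0∞)
    (hf : AEMeasurable f ν) {p : ℝ} (hp : 1 ≤ p) :
    (∫⁻ x, f x ∂ν) ^ p ≤ ν Set.univ ^ (p - 1) * ∫⁻ x, f x ^ p ∂ν := by
  rcases hp.eq_or_lt with h | h
  · subst h; simp
  · have hpq := Real.HolderConjugate.conjExponent h
    have := ENNReal.lintegral_mul_le_Lp_mul_Lq ν hpq hf (aemeasurable_const (b := (1:ℝ≥0∞)))
    simp only [Pi.mul_apply, mul_one, ENNReal.one_rpow, lintegral_const, one_mul] at this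
    calc _ ≤ ((∫⁻ x, f x ^ p ∂ν) ^ (1 / p) * ν Set.univ ^ (1 / p.conjExponent)) ^ p := by
          gcongr
      _ = _ := by
          rw [ENNReal.mul_rpow_of_nonneg _ _ (by linarith), ← ENNReal.rpow_mul, ← ENNReal.rpow_mul,
            mul_comm]
          have h1 : 1 / p * p = 1 := by field_simp
          have h2 : 1 / p.conjExponent * p = p - 1 := by
            rw [Real.conjExponent]
            have : p - 1 ≠ 0 := by linarith
            field_simp
          rw [h1, h2, ENNReal.rpow_one]

variable {n : ℕ}

lemma avg_jensen {α : Type*} [MeasurableSpace α] (ν : Measure α) (h0 : ν Set.univ ≠ 0)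
    [IsFiniteMeasure ν] (u : α → ℝ) (hu : Integrable u ν) (c : ℝ) {p : ℝ} (hp : 1 ≤ p) :
    ‖c - (∫ y, u y ∂ν) / (ν Set.univ).toReal‖ₑ ^ p ≤
      (ν Set.univ)⁻¹ * ∫⁻ y, ‖c - u y‖ₑ ^ p ∂ν := by
  have ht : ν Set.univ ≠ ∞ := measure_ne_top _ _
  have hpos : 0 < (ν Set.univ).toReal := ENNReal.toReal_pos h0 ht
  have e1 : c - (∫ y, u y ∂ν) / (ν Set.univ).toReal = (ν Set.univ).toReal⁻¹ * ∫ y, (c - u y) ∂ν := by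
    rw [integral_sub (integrable_const _) hu, integral_const, measureReal_def, smul_eq_mul]
    field_simp
  have e2 : ‖c - (∫ y, u y ∂ν) / (ν Set.univ).toReal‖ₑ ≤ (ν Set.univ)⁻¹ * ∫⁻ y, ‖c - u y‖ₑ ∂ν := by
    rw [e1, enorm_mul]
    gcongr
    · rw [Real.enorm_of_nonneg (by positivity), ENNReal.ofReal_inv_of_pos hpos, ENNReal.ofReal_toReal ht]
    · exact enorm_integral_le_lintegral_enorm _
  calc _ ≤ ((ν Set.univ)⁻¹ * ∫⁻ y, ‖c - u y‖ₑ ∂ν) ^ p := by gcongr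
    _ = (ν Set.univ)⁻¹ ^ p * (∫⁻ y, ‖c - u y‖ₑ ∂ν) ^ p := ENNReal.mul_rpow_of_nonneg _ _ (by linarith)
    _ ≤ (ν Set.univ)⁻¹ ^ p * (ν Set.univ ^ (p - 1) * ∫⁻ y, ‖c - u y‖ₑ ^ p ∂ν) := by
        gcongr
        exact jensen_lint ν _ ((aestronglyMeasurable_const.sub hu.1).enorm) hp
    _ = _ := by
        rw [← mul_assoc]
        congr 1
        rw [ENNReal.inv_rpow, ← ENNReal.rpow_neg, ← ENNReal.rpow_add _ _ h0 ht, ← ENNReal.rpow_neg_one]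
        congr 1; ring

lemma cov_affine (h : EuclideanSpace ℝ (Fin n) → ℝ≥0∞) (hh : Measurable h)
    (a : EuclideanSpace ℝ (Fin n)) (s : ℝ) (hs : s ≠ 0) :
    ∫⁻ y, h (a + s • y) = ENNReal.ofReal (|(s ^ n)⁻¹|) * ∫⁻ y, h y := by
  have h1 := Measure.map_addHaar_smul (volume : Measure (EuclideanSpace ℝ (Fin n))) hs
  have h2 : ∫⁻ y, h (a + s • y) = ∫⁻ y, h (a + y) ∂(Measure.map (s • ·) volume) := by
    rw [lintegral_map (f := fun y => h (a + y)) (hh.comp (measurable_const_add a))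
      (measurable_const_smul s)]
  rw [h2, h1, lintegral_smul_measure, lintegral_add_left_eq_self (μ := volume) h a]
  simp

lemma seg_est (u : EuclideanSpace ℝ (Fin n) → ℝ) (z : EuclideanSpace ℝ (Fin n)) (r : ℝ)
    (hu : ∀ x ∈ Metric.ball z r, DifferentiableAt ℝ u x) {x y : EuclideanSpace ℝ (Fin n)}
    (hx : x ∈ Metric.ball z r) (hy : y ∈ Metric.ball z r) :
    ‖u x - u y‖ₑ ≤ ∫⁻ t in Set.Icc (0:ℝ) 1, ‖fderiv ℝ u (x + t • (y - x))‖ₑ * ‖y - x‖ₑ := by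
  have hmem : ∀ t ∈ Set.Icc (0:ℝ) 1, x + t • (y - x) ∈ Metric.ball z r := fun t ht =>
    (convex_ball z r).add_smul_sub_mem hx hy ht
  set f' : ℝ → ℝ := fun t => fderiv ℝ u (x + t • (y - x)) (y - x) with hf'
  have hder : ∀ t ∈ Set.uIcc (0:ℝ) 1, HasDerivAt (fun t => u (x + t • (y - x))) (f' t) t := by
    intro t ht
    rw [Set.uIcc_of_le zero_le_one] at ht
    have h1 : HasDerivAt (fun t : ℝ => x + t • (y - x)) (y - x) t := by
      simpa using ((hasDerivAt_id t).smul_const (y - x)).const_add x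
    exact (hu _ (hmem t ht)).hasFDerivAt.comp_hasDerivAt t h1
  have hmeas : Measurable f' := by
    have : Measurable fun w => fderiv ℝ u w (y - x) := measurable_fderiv_apply_const ℝ u (y - x)
    exact this.comp (by fun_prop)
  have hle : ∫⁻ t in Set.Icc (0:ℝ) 1, ‖f' t‖ₑ ≤
      ∫⁻ t in Set.Icc (0:ℝ) 1, ‖fderiv ℝ u (x + t • (y - x))‖ₑ * ‖y - x‖ₑ :=
    lintegral_mono fun t => ContinuousLinearMap.le_opENorm _ _
  refine le_trans ?_ hle
  by_cases hfin : ∫⁻ t in Set.Icc (0:ℝ) 1, ‖f' t‖ₑ = ∞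
  · rw [hfin]; exact le_top
  have hint : IntervalIntegrable f' volume 0 1 := by
    rw [intervalIntegrable_iff_integrableOn_Icc_of_le zero_le_one]
    exact ⟨hmeas.aestronglyMeasurable, lt_top_iff_ne_top.2 hfin⟩
  have := intervalIntegral.integral_eq_sub_of_hasDerivAt hder hint
  simp only [one_smul, zero_smul, add_zero, add_sub_cancel] at this
  rw [← enorm_neg, neg_sub, ← this, intervalIntegral.integral_of_le zero_le_one,
    ← integral_Icc_eq_integral_Ioc]
  exact enorm_integral_le_lintegral_enorm _

lemma pair_est (u : EuclideanSpace ℝ (Fin n) → ℝ) (z : EuclideanSpace ℝ (Fin n)) (r : ℝ)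
    (hu : ∀ x ∈ Metric.ball z r, DifferentiableAt ℝ u x) {p : ℝ} (hp : 1 ≤ p) :
    ∫⁻ x in Metric.ball z r, ∫⁻ y in Metric.ball z r, ‖u x - u y‖ₑ ^ p ≤
      2 ^ n * ENNReal.ofReal (2 * r) ^ p * volume (Metric.ball z r) *
        ∫⁻ x in Metric.ball z r, ‖fderiv ℝ u x‖ₑ ^ p := by
  set B := Metric.ball z r with hB
  have hBm : MeasurableSet B := measurableSet_ball
  set h : EuclideanSpace ℝ (Fin n) → ℝ≥0∞ := B.indicator fun x => ‖fderiv ℝ u x‖ₑ ^ p with hh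
  have hhm : Measurable h := ((measurable_fderiv ℝ u).enorm.pow_const p).indicator hBm
  have hI : ∫⁻ x, h x = ∫⁻ x in B, ‖fderiv ℝ u x‖ₑ ^ p := lintegral_indicator hBm _
  rw [← hI]
  set I : Measure ℝ := volume.restrict (Set.Icc (0:ℝ) 1) with hIdef
  have hI1 : I Set.univ = 1 := by simp [hIdef]
  have hpt : ∀ x ∈ B, ∀ y ∈ B, ‖u x - u y‖ₑ ^ p ≤
      ENNReal.ofReal (2 * r) ^ p * ∫⁻ t, h ((1 - t) • x + t • y) ∂I := by
    intro x hx y hy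
    have hmeas : Measurable fun t : ℝ => ‖fderiv ℝ u (x + t • (y - x))‖ₑ :=
      (measurable_fderiv ℝ u).enorm.comp (by fun_prop)
    have hn : ‖y - x‖ₑ ≤ ENNReal.ofReal (2 * r) := by
      rw [← ofReal_norm, ← dist_eq_norm]
      apply ENNReal.ofReal_le_ofReal
      have := dist_triangle_right y x z
      rw [hB, Metric.mem_ball] at hx hy
      linarith
    calc _ ≤ (∫⁻ t, ‖fderiv ℝ u (x + t • (y - x))‖ₑ * ‖y - x‖ₑ ∂I) ^ p := by
          gcongr; exact seg_est u z r hu hx hy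
      _ = (∫⁻ t, ‖fderiv ℝ u (x + t • (y - x))‖ₑ ∂I) ^ p * ‖y - x‖ₑ ^ p := by
          rw [lintegral_mul_const _ hmeas, ENNReal.mul_rpow_of_nonneg _ _ (by linarith)]
      _ ≤ (∫⁻ t, ‖fderiv ℝ u (x + t • (y - x))‖ₑ ^ p ∂I) * ENNReal.ofReal (2 * r) ^ p := by
          gcongr
          have := jensen_lint I _ hmeas.aemeasurable hp
          simpa [hI1] using this
      _ = (∫⁻ t, h ((1 - t) • x + t • y) ∂I) * ENNReal.ofReal (2 * r) ^ p := by
          congr 1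
          apply setLIntegral_congr_fun measurableSet_Icc
          intro t ht
          have e : x + t • (y - x) = (1 - t) • x + t • y := by module
          have : x + t • (y - x) ∈ B := (convex_ball z r).add_smul_sub_mem hx hy ht
          simp only [hh]
          rw [← e, Set.indicator_of_mem this]
      _ = _ := mul_comm _ _
  have hF : Measurable fun q : (EuclideanSpace ℝ (Fin n) × EuclideanSpace ℝ (Fin n)) × ℝ =>
      h ((1 - q.2) • q.1.1 + q.2 • q.1.2) := hhm.comp (by fun_prop)
  have key : ∀ t ∈ Set.Icc (0:ℝ) 1, ∫⁻ x in B, ∫⁻ y in B, h ((1 - t) • x + t • y) ≤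
      2 ^ n * volume B * ∫⁻ x, h x := by
    have hb : ∀ s : ℝ, 1/2 ≤ s → ENNReal.ofReal (|(s ^ n)⁻¹|) ≤ 2 ^ n := by
      intro s hs
      have h0 : 0 < s := by linarith
      rw [abs_of_pos (by positivity), ← inv_pow, ENNReal.ofReal_pow (by positivity)]
      gcongr
      rw [← ENNReal.ofReal_ofNat]
      apply ENNReal.ofReal_le_ofReal
      rw [inv_le_comm₀ h0 (by norm_num)]; linarith
    have hb2 : ∀ (s : ℝ) a, 1/2 ≤ s → ∫⁻ y in B, h (a + s • y) ≤ 2 ^ n * ∫⁻ x, h x := by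
      intro s a hs
      calc _ ≤ ∫⁻ y, h (a + s • y) := setLIntegral_le_lintegral _ _
        _ = _ := cov_affine h hhm a s (by linarith)
        _ ≤ _ := by gcongr; exact hb s hs
    intro t ht
    rcases le_total (1/2) t with h2 | h2
    · calc _ ≤ ∫⁻ x in B, 2 ^ n * ∫⁻ x, h x := lintegral_mono fun x => hb2 t _ h2
        _ = _ := by rw [setLIntegral_const]; ring
    · rw [lintegral_lintegral_swap]
      · calc _ ≤ ∫⁻ x in B, 2 ^ n * ∫⁻ x, h x := by
              apply lintegral_mono
              intro y
              simp only [add_comm _ (t • y)]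
              exact hb2 (1 - t) _ (by linarith)
          _ = _ := by rw [setLIntegral_const]; ring
      · exact (hhm.comp (by fun_prop)).aemeasurable
  calc _ ≤ ∫⁻ x in B, ∫⁻ y in B, ENNReal.ofReal (2 * r) ^ p * ∫⁻ t, h ((1 - t) • x + t • y) ∂I :=
        setLIntegral_mono' hBm fun x hx => setLIntegral_mono' hBm fun y hy => hpt x hx y hy
    _ = ENNReal.ofReal (2 * r) ^ p * ∫⁻ x in B, ∫⁻ y in B, ∫⁻ t, h ((1 - t) • x + t • y) ∂I := by
        have hne : ENNReal.ofReal (2 * r) ^ p ≠ ∞ :=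
          ENNReal.rpow_ne_top_of_nonneg (by linarith) ENNReal.ofReal_ne_top
        simp_rw [lintegral_const_mul' _ _ hne]
    _ = ENNReal.ofReal (2 * r) ^ p * ∫⁻ t, (∫⁻ x in B, ∫⁻ y in B, h ((1 - t) • x + t • y)) ∂I := by
        congr 1
        have e1 : ∀ x, ∫⁻ y in B, ∫⁻ t, h ((1 - t) • x + t • y) ∂I =
            ∫⁻ t, (∫⁻ y in B, h ((1 - t) • x + t • y)) ∂I := fun x => by
          rw [lintegral_lintegral_swap]
          exact (hhm.comp (by fun_prop)).aemeasurable
        simp_rw [e1]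
        rw [lintegral_lintegral_swap]
        apply Measurable.aemeasurable
        have : Measurable fun w : (EuclideanSpace ℝ (Fin n) × ℝ) × EuclideanSpace ℝ (Fin n) =>
          h ((1 - w.1.2) • w.1.1 + w.1.2 • w.2) := hhm.comp (by fun_prop)
        exact this.lintegral_prod_right'
    _ ≤ ENNReal.ofReal (2 * r) ^ p * ∫⁻ t, 2 ^ n * volume B * (∫⁻ x, h x) ∂I := by
        refine mul_le_mul_right ?_ _
        exact setLIntegral_mono' measurableSet_Icc key
    _ = _ := by
        rw [lintegral_const, hI1]; ring

end D

open MeasureTheory ENNReal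

section D2
variable {n : ℕ} {G : Set (EuclideanSpace ℝ (Fin n))}

lemma loc1 (u : EuclideanSpace ℝ (Fin n) → ℝ) (z : EuclideanSpace ℝ (Fin n)) (r : ℝ)
    (hu : ∀ x ∈ Metric.ball z r, DifferentiableAt ℝ u x) {p : ℝ} (hp : 1 ≤ p)
    (b1 b2 : Set (EuclideanSpace ℝ (Fin n))) (h1 : b1 ⊆ Metric.ball z r) (h2 : b2 ⊆ Metric.ball z r)
    (hi : IntegrableOn u b2) (h0 : volume b2 ≠ 0) :
    ∫⁻ x in b1, ‖u x - (∫ y in b2, u y) / (volume b2).toReal‖ₑ ^ p ≤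
      (volume b2)⁻¹ * (2 ^ n * ENNReal.ofReal (2 * r) ^ p * volume (Metric.ball z r) *
        ∫⁻ x in Metric.ball z r, ‖fderiv ℝ u x‖ₑ ^ p) := by
  have ht : volume b2 ≠ ∞ := ((measure_mono h2).trans_lt Metric.isBounded_ball.measure_lt_top).ne
  have : IsFiniteMeasure (volume.restrict b2) := ⟨by simpa using ht.lt_top⟩
  calc _ ≤ ∫⁻ x in b1, (volume b2)⁻¹ * ∫⁻ y in b2, ‖u x - u y‖ₑ ^ p := by
        apply lintegral_mono
        intro x
        have := avg_jensen (volume.restrict b2) (by simpa using h0) u hi (u x) hp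
        simpa using this
    _ = (volume b2)⁻¹ * ∫⁻ x in b1, ∫⁻ y in b2, ‖u x - u y‖ₑ ^ p :=
        lintegral_const_mul' _ _ (ENNReal.inv_ne_top.2 h0)
    _ ≤ (volume b2)⁻¹ * ∫⁻ x in Metric.ball z r, ∫⁻ y in Metric.ball z r, ‖u x - u y‖ₑ ^ p := by
        refine mul_le_mul_right ?_ _
        refine (lintegral_mono fun x => lintegral_mono_set h2).trans (lintegral_mono_set h1)
    _ ≤ _ := mul_le_mul_right (pair_est u z r hu hp) _

lemma loc2 (u : EuclideanSpace ℝ (Fin n) → ℝ) (z : EuclideanSpace ℝ (Fin n)) (r : ℝ)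
    (hu : ∀ x ∈ Metric.ball z r, DifferentiableAt ℝ u x) {p : ℝ} (hp : 1 ≤ p)
    (b1 b2 : Set (EuclideanSpace ℝ (Fin n))) (h1 : b1 ⊆ Metric.ball z r) (h2 : b2 ⊆ Metric.ball z r)
    (hi1 : IntegrableOn u b1) (h01 : volume b1 ≠ 0)
    (hi : IntegrableOn u b2) (h0 : volume b2 ≠ 0) :
    ‖(∫ y in b1, u y) / (volume b1).toReal - (∫ y in b2, u y) / (volume b2).toReal‖ₑ ^ p ≤
      (volume b1)⁻¹ * ((volume b2)⁻¹ * (2 ^ n * ENNReal.ofReal (2 * r) ^ p *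
        volume (Metric.ball z r) * ∫⁻ x in Metric.ball z r, ‖fderiv ℝ u x‖ₑ ^ p)) := by
  have ht : volume b1 ≠ ∞ := ((measure_mono h1).trans_lt Metric.isBounded_ball.measure_lt_top).ne
  have : IsFiniteMeasure (volume.restrict b1) := ⟨by simpa using ht.lt_top⟩
  have := avg_jensen (volume.restrict b1) (by simpa using h01) u hi1
    ((∫ y in b2, u y) / (volume b2).toReal) hp
  simp only [Measure.restrict_apply_univ] at this
  rw [← enorm_neg, neg_sub]
  refine this.trans (mul_le_mul_right ?_ _)
  refine le_trans (le_of_eq ?_) (loc1 u z r hu hp b1 b2 h1 h2 hi h0)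
  congr 1
  ext x
  rw [← enorm_neg, neg_sub]

/-- average over the Whitney ball -/
noncomputable def avgW (G : Set (EuclideanSpace ℝ (Fin n))) (u : EuclideanSpace ℝ (Fin n) → ℝ)
    (z : EuclideanSpace ℝ (Fin n)) : ℝ :=
  (∫ y in Metric.ball z (Metric.infDist z (frontier G) / 4), u y) /
    (volume (Metric.ball z (Metric.infDist z (frontier G) / 4))).toReal

/-- normalised energy on the enlarged Whitney ball -/
noncomputable def TW (G : Set (EuclideanSpace ℝ (Fin n))) (u : EuclideanSpace ℝ (Fin n) → ℝ) (p : ℝ)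
    (z : EuclideanSpace ℝ (Fin n)) : ℝ≥0∞ :=
  ENNReal.ofReal (Metric.infDist z (frontier G)) ^ p *
    (volume (Metric.ball z (Metric.infDist z (frontier G) / 2)))⁻¹ *
    ∫⁻ x in Metric.ball z (Metric.infDist z (frontier G) / 2), ‖fderiv ℝ u x‖ₑ ^ p

lemma vol_cmp (hn : 2 ≤ n) (x y : EuclideanSpace ℝ (Fin n)) {r s : ℝ} (hr : 0 < r) (hs : 0 < s)
    {c : ℝ} (hc : 0 ≤ c) (h : r ≤ c * s) : volume (Metric.ball x r) ≤
      ENNReal.ofReal c ^ n * volume (Metric.ball y s) := by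
  rw [vol_ball hn x hr.le, vol_ball hn y hs.le, ← mul_assoc, ← mul_pow, ← ENNReal.ofReal_mul hc]
  gcongr

lemma vol_inv_cmp (hn : 2 ≤ n) (x y : EuclideanSpace ℝ (Fin n)) {r s : ℝ} (hr : 0 < r) (hs : 0 < s)
    (h : r ≤ 3 * s) : (volume (Metric.ball y s))⁻¹ ≤
      3 ^ n * (volume (Metric.ball x r))⁻¹ := by
  have h1 := vol_cmp hn x y hr hs (by norm_num : (0:ℝ) ≤ 3) h
  rw [show ENNReal.ofReal 3 = 3 by simp] at h1
  have h2 := ENNReal.inv_le_inv.2 h1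
  rw [ENNReal.mul_inv (by left; positivity) (by left; finiteness)] at h2
  calc _ = 3 ^ n * ((3 ^ n)⁻¹ * (volume (Metric.ball y s))⁻¹) := by
        rw [← mul_assoc, ENNReal.mul_inv_cancel (by positivity) (by finiteness), one_mul]
    _ ≤ _ := by gcongr


lemma start_est (hn : 2 ≤ n) (hf : (frontier G).Nonempty) (hGo : IsOpen G)
  {u : EuclideanSpace ℝ (Fin n) → ℝ} (hud : DifferentiableOn ℝ u G) (hui : IntegrableOn u G)
  {p : ℝ} (hp : 1 ≤ p)
    {x : EuclideanSpace ℝ (Fin n)} (hx : x ∈ G) :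
    ∫⁻ y in Metric.ball x (Metric.infDist x (frontier G) / 4), ‖u y - avgW G u x‖ₑ ^ p ≤
      volume (Metric.ball x (Metric.infDist x (frontier G) / 4)) * (18 ^ n * TW G u p x) := by
  have hd := dd_pos hf hGo hx
  set d := Metric.infDist x (frontier G) with hdd
  have hA : Metric.ball x (d / 2) ⊆ G := (Metric.ball_subset_ball (by linarith)).trans (dd_ball hGo hx)
  have hbA : Metric.ball x (d / 4) ⊆ Metric.ball x (d / 2) := Metric.ball_subset_ball (by linarith)
  have hb0 : volume (Metric.ball x (d / 4)) ≠ 0 := (vol_ball_pos x (by linarith)).ne'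
  have hbt : volume (Metric.ball x (d / 4)) ≠ ∞ := Metric.isBounded_ball.measure_lt_top.ne
  have hA0 : volume (Metric.ball x (d / 2)) ≠ 0 := (vol_ball_pos x (by linarith)).ne'
  have hAt : volume (Metric.ball x (d / 2)) ≠ ∞ := Metric.isBounded_ball.measure_lt_top.ne
  have h := loc1 u x (d / 2) (fun y hy => (hud y (hA hy)).differentiableAt (hGo.mem_nhds (hA hy))) hp
    _ _ hbA hbA (hui.mono_set (hbA.trans hA)) hb0
  refine h.trans ?_
  have h3 := vol_inv_cmp hn x x (r := d / 2) (s := d / 4) (by linarith) (by linarith) (by linarith)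
  set V := volume (Metric.ball x (d / 4))
  set W := volume (Metric.ball x (d / 2))
  have e : 2 * (d / 2) = d := by ring
  rw [e, TW, ← hdd]
  set J := ∫⁻ x in Metric.ball x (d / 2), ‖fderiv ℝ u x‖ₑ ^ p
  calc V⁻¹ * (2 ^ n * ENNReal.ofReal d ^ p * W * J)
      = (V * V⁻¹) * V⁻¹ * (2 ^ n * ENNReal.ofReal d ^ p * W * J) := by
        rw [ENNReal.mul_inv_cancel hb0 hbt, one_mul]
    _ ≤ (V * (3 ^ n * W⁻¹)) * (3 ^ n * W⁻¹) * (2 ^ n * ENNReal.ofReal d ^ p * W * J) := by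
        gcongr
    _ = V * ((3 * 3 * 2) ^ n * (ENNReal.ofReal d ^ p * W⁻¹ * J)) * (W * W⁻¹) := by
        rw [mul_pow, mul_pow]; ring
    _ = _ := by
        rw [ENNReal.mul_inv_cancel hA0 hAt, mul_one]; norm_num; rfl

lemma step_est (hn : 2 ≤ n) (hf : (frontier G).Nonempty) (hGo : IsOpen G)
  {u : EuclideanSpace ℝ (Fin n) → ℝ} (hud : DifferentiableOn ℝ u G) (hui : IntegrableOn u G)
  {p : ℝ} (hp : 1 ≤ p)
    {z w : EuclideanSpace ℝ (Fin n)} (hz : z ∈ G) (hw : w ∈ G)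
    (hzw : dist z w ≤ Metric.infDist z (frontier G) / 8) :
    ‖avgW G u z - avgW G u w‖ₑ ^ p ≤ 18 ^ n * TW G u p z := by
  have hd := dd_pos hf hGo hz
  have hd' := dd_pos hf hGo hw
  have l1 := dd_lip (G := G) z w
  have l2 := dd_lip (G := G) w z
  rw [dist_comm w z] at l2
  set d := Metric.infDist z (frontier G) with hdd
  set d' := Metric.infDist w (frontier G) with hdd'
  have hA : Metric.ball z (d / 2) ⊆ G := (Metric.ball_subset_ball (by linarith)).trans (dd_ball hGo hz)
  have hbA : Metric.ball z (d / 4) ⊆ Metric.ball z (d / 2) := Metric.ball_subset_ball (by linarith)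
  have hbA' : Metric.ball w (d' / 4) ⊆ Metric.ball z (d / 2) := by
    apply Metric.ball_subset_ball'
    rw [dist_comm]; linarith
  have hA0 : volume (Metric.ball z (d / 2)) ≠ 0 := (vol_ball_pos z (by linarith)).ne'
  have hAt : volume (Metric.ball z (d / 2)) ≠ ∞ := Metric.isBounded_ball.measure_lt_top.ne
  have h := loc2 u z (d / 2) (fun y hy => (hud y (hA hy)).differentiableAt (hGo.mem_nhds (hA hy))) hp
    _ _ hbA hbA' (hui.mono_set (hbA.trans hA)) (vol_ball_pos z (by linarith)).ne'
    (hui.mono_set (hbA'.trans hA)) (vol_ball_pos w (by linarith)).ne'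
  refine h.trans ?_
  have h3 := vol_inv_cmp hn z z (r := d / 2) (s := d / 4) (by linarith) (by linarith) (by linarith)
  have h4 := vol_inv_cmp hn z w (r := d / 2) (s := d' / 4) (by linarith) (by linarith) (by linarith)
  set V := volume (Metric.ball z (d / 4))
  set V' := volume (Metric.ball w (d' / 4))
  set W := volume (Metric.ball z (d / 2))
  have e : 2 * (d / 2) = d := by ring
  rw [e, TW, ← hdd]
  set J := ∫⁻ x in Metric.ball z (d / 2), ‖fderiv ℝ u x‖ₑ ^ p
  calc V⁻¹ * (V'⁻¹ * (2 ^ n * ENNReal.ofReal d ^ p * W * J))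
      ≤ (3 ^ n * W⁻¹) * ((3 ^ n * W⁻¹) * (2 ^ n * ENNReal.ofReal d ^ p * W * J)) := by
        gcongr
    _ = ((3 * 3 * 2) ^ n * (ENNReal.ofReal d ^ p * W⁻¹ * J)) * (W * W⁻¹) := by
        rw [mul_pow, mul_pow]; ring
    _ = _ := by
        rw [ENNReal.mul_inv_cancel hA0 hAt, mul_one]; norm_num; rfl

lemma chain_est (hn : 2 ≤ n) (hf : (frontier G).Nonempty) (hGo : IsOpen G)
  {u : EuclideanSpace ℝ (Fin n) → ℝ} (hud : DifferentiableOn ℝ u G) (hui : IntegrableOn u G)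
  {p : ℝ} (hp : 1 ≤ p)
    {N : ℕ} (hN : 1 ≤ N) (z : ℕ → EuclideanSpace ℝ (Fin n)) (hz : ∀ k, z k ∈ G)
    (hs : ∀ k < N, dist (z k) (z (k+1)) ≤ Metric.infDist (z k) (frontier G) / 8) :
    ∫⁻ y in Metric.ball (z 0) (Metric.infDist (z 0) (frontier G) / 4), ‖u y - avgW G u (z N)‖ₑ ^ p ≤
      ((N + 1 : ℕ) : ℝ≥0∞) ^ (p - 1) * (2 * 18 ^ n) *
        (volume (Metric.ball (z 0) (Metric.infDist (z 0) (frontier G) / 4)) *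
        ∑ k ∈ Finset.range N, TW G u p (z k)) := by
  set b := Metric.ball (z 0) (Metric.infDist (z 0) (frontier G) / 4)
  set S := ∑ k ∈ Finset.range N, TW G u p (z k)
  set P := ((N + 1 : ℕ) : ℝ≥0∞) ^ (p - 1)
  have hp0 : 0 ≤ p := by linarith
  have hP : P ≠ ∞ := ENNReal.rpow_ne_top_of_nonneg (by linarith) (by finiteness)
  have hpt : ∀ y, ‖u y - avgW G u (z N)‖ₑ ^ p ≤ P * (‖u y - avgW G u (z 0)‖ₑ ^ p + 18 ^ n * S) := by
    intro y
    let f : ℕ → ℝ≥0∞ := fun k => Nat.casesOn k ‖u y - avgW G u (z 0)‖ₑ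
      (fun k => ‖avgW G u (z k) - avgW G u (z (k+1))‖ₑ)
    have h1 : ‖u y - avgW G u (z N)‖ₑ ≤ ∑ k ∈ Finset.range (N + 1), f k := by
      rw [Finset.sum_range_succ']
      have : u y - avgW G u (z N) = (∑ k ∈ Finset.range N, (avgW G u (z k) - avgW G u (z (k+1)))) +
          (u y - avgW G u (z 0)) := by
        rw [Finset.sum_range_sub' (fun k => avgW G u (z k))]; ring
      rw [this]
      exact (enorm_add_le _ _).trans (add_le_add_left (enorm_sum_le _ _) _)
    calc _ ≤ (∑ k ∈ Finset.range (N + 1), f k) ^ p := by gcongr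
      _ ≤ P * ∑ k ∈ Finset.range (N + 1), f k ^ p := by
          have := ENNReal.rpow_sum_le_const_mul_sum_rpow (Finset.range (N+1)) f hp
          simpa only [Finset.card_range] using this
      _ ≤ _ := by
          gcongr
          rw [Finset.sum_range_succ', add_comm]
          gcongr
          · exact le_rfl
          · rw [Finset.mul_sum]
            apply Finset.sum_le_sum
            intro k hk
            exact step_est hn hf hGo hud hui hp (hz k) (hz _) (hs k (Finset.mem_range.1 hk))
  have h0 : TW G u p (z 0) ≤ S :=
    Finset.single_le_sum (f := fun k => TW G u p (z k)) (fun _ _ => zero_le) (Finset.mem_range.2 hN)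
  calc _ ≤ ∫⁻ y in b, P * (‖u y - avgW G u (z 0)‖ₑ ^ p + 18 ^ n * S) := lintegral_mono hpt
    _ = P * ((∫⁻ y in b, ‖u y - avgW G u (z 0)‖ₑ ^ p) + 18 ^ n * S * volume b) := by
        rw [lintegral_const_mul' _ _ hP, lintegral_add_right _ measurable_const, setLIntegral_const]
    _ ≤ P * (volume b * (18 ^ n * S) + 18 ^ n * S * volume b) := by
        gcongr
        refine (start_est hn hf hGo hud hui hp (hz 0)).trans ?_
        gcongr
    _ = _ := by ring

end D2

open MeasureTheory ENNReal

section E1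
variable {n : ℕ} {G : Set (EuclideanSpace ℝ (Fin n))}

/-- weight kernel -/
noncomputable def kerW (G : Set (EuclideanSpace ℝ (Fin n))) (p : ℝ)
    (z w : EuclideanSpace ℝ (Fin n)) : ℝ≥0∞ :=
  (Metric.ball z (Metric.infDist z (frontier G) / 2)).indicator
    (fun _ => ENNReal.ofReal (Metric.infDist z (frontier G)) ^ p *
    (volume (Metric.ball z (Metric.infDist z (frontier G) / 2)))⁻¹) w

lemma kerW_meas (p : ℝ) (z : EuclideanSpace ℝ (Fin n)) : Measurable (kerW G p z) :=
  measurable_const.indicator measurableSet_ball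

lemma TW_eq (hf : (frontier G).Nonempty) (hGo : IsOpen G) (u : EuclideanSpace ℝ (Fin n) → ℝ)
    {p : ℝ} (hp : 0 ≤ p) {z : EuclideanSpace ℝ (Fin n)} (hz : z ∈ G) :
    TW G u p z = ∫⁻ w in G, kerW G p z w * ‖fderiv ℝ u w‖ₑ ^ p := by
  have hd := dd_pos hf hGo hz
  have hA : Metric.ball z (Metric.infDist z (frontier G) / 2) ⊆ G :=
    (Metric.ball_subset_ball (by linarith)).trans (dd_ball hGo hz)
  have h0 : volume (Metric.ball z (Metric.infDist z (frontier G) / 2)) ≠ 0 :=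
    (vol_ball_pos z (by linarith)).ne'
  set c := ENNReal.ofReal (Metric.infDist z (frontier G)) ^ p *
    (volume (Metric.ball z (Metric.infDist z (frontier G) / 2)))⁻¹ with hc
  have hct : c ≠ ∞ := ENNReal.mul_ne_top
    (ENNReal.rpow_ne_top_of_nonneg hp ENNReal.ofReal_ne_top) (ENNReal.inv_ne_top.2 h0)
  have e : ∀ w, kerW G p z w * ‖fderiv ℝ u w‖ₑ ^ p =
      (Metric.ball z (Metric.infDist z (frontier G) / 2)).indicator
        (fun w => c * ‖fderiv ℝ u w‖ₑ ^ p) w := by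
    intro w
    rw [kerW]
    by_cases hw : w ∈ Metric.ball z (Metric.infDist z (frontier G) / 2)
    · rw [Set.indicator_of_mem hw, Set.indicator_of_mem hw]
    · rw [Set.indicator_of_notMem hw, Set.indicator_of_notMem hw, zero_mul]
  simp_rw [e]
  rw [lintegral_indicator measurableSet_ball, Measure.restrict_restrict measurableSet_ball,
    Set.inter_eq_self_of_subset_left hA, lintegral_const_mul' _ _ hct, TW, hc]

lemma kerW_le (hn : 2 ≤ n) (hf : (frontier G).Nonempty) (hGo : IsOpen G) {β : ℝ} (hβ : 0 < β)
    (hβ1 : β < 1) {z w : EuclideanSpace ℝ (Fin n)} (hz : z ∈ G) (hw : w ∈ G) :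
    kerW G ((n:ℝ) - n * β) z w ≤
      4 ^ n * (volume (Metric.ball w (Metric.infDist w (frontier G) ^ β)))⁻¹ := by
  rw [kerW]
  by_cases hm : w ∈ Metric.ball z (Metric.infDist z (frontier G) / 2)
  swap
  · rw [Set.indicator_of_notMem hm]; exact zero_le
  rw [Set.indicator_of_mem hm]
  have hd := dd_pos hf hGo hz
  have hd' := dd_pos hf hGo hw
  have l1 := dd_lip (G := G) w z
  rw [Metric.mem_ball] at hm
  set d := Metric.infDist z (frontier G)
  set d' := Metric.infDist w (frontier G)
  have hρ : 0 < d' ^ β := Real.rpow_pos_of_pos hd' _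
  have hA0 : volume (Metric.ball z (d / 2)) ≠ 0 := (vol_ball_pos z (by linarith)).ne'
  have hAt : volume (Metric.ball z (d / 2)) ≠ ∞ := Metric.isBounded_ball.measure_lt_top.ne
  have hB0 : volume (Metric.ball w (d' ^ β)) ≠ 0 := (vol_ball_pos w hρ).ne'
  have hBt : volume (Metric.ball w (d' ^ β)) ≠ ∞ := Metric.isBounded_ball.measure_lt_top.ne
  rw [← div_eq_mul_inv, ← div_eq_mul_inv, ENNReal.div_le_iff hA0 hAt, ← ENNReal.mul_div_right_comm,
    ENNReal.le_div_iff_mul_le (Or.inl hB0) (Or.inl hBt)]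
  rw [vol_ball hn z (by linarith), vol_ball hn w hρ.le, ← mul_assoc, ← mul_assoc]
  gcongr ?_ * _
  rw [ENNReal.ofReal_rpow_of_pos hd, ← ENNReal.ofReal_pow hρ.le, ← ENNReal.ofReal_pow (by linarith),
    ← ENNReal.ofReal_mul (by positivity), show (4:ℝ≥0∞) ^ n = ENNReal.ofReal (4 ^ n) by
      rw [ENNReal.ofReal_pow (by norm_num)]; simp, ← ENNReal.ofReal_mul (by positivity)]
  apply ENNReal.ofReal_le_ofReal
  have h1 : d' ^ β ≤ 2 * d ^ β := by
    calc d' ^ β ≤ (2 * d) ^ β := Real.rpow_le_rpow hd'.le (by linarith) hβ.le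
      _ = 2 ^ β * d ^ β := Real.mul_rpow (by norm_num) hd.le
      _ ≤ 2 ^ (1:ℝ) * d ^ β := by
          gcongr
          norm_num
      _ = _ := by simp
  have h2 : d ^ ((n:ℝ) - n * β) * (d ^ β) ^ n = d ^ n := by
    rw [← Real.rpow_natCast (d ^ β), ← Real.rpow_mul hd.le, ← Real.rpow_add hd, ← Real.rpow_natCast]
    congr 1; ring
  calc d ^ ((n:ℝ) - n * β) * (d' ^ β) ^ n ≤ d ^ ((n:ℝ) - n * β) * (2 * d ^ β) ^ n := by gcongr
    _ = 2 ^ n * (d ^ ((n:ℝ) - n * β) * (d ^ β) ^ n) := by rw [mul_pow]; ring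
    _ = (4 * (d / 2)) ^ n := by rw [h2, ← mul_pow]; ring
    _ = _ := mul_pow _ _ _

lemma overlap (hn : 2 ≤ n) (hf : (frontier G).Nonempty) (hGo : IsOpen G)
    (hGb : Bornology.IsBounded G) {β : ℝ} (hβ : 0 < β) (hβ1 : β < 1)
    (C : ℝ) (hC : 0 < C)
    (N : EuclideanSpace ℝ (Fin n) → ℕ) (z : EuclideanSpace ℝ (Fin n) → ℕ → EuclideanSpace ℝ (Fin n))
    (hz : ∀ x ∈ G, ∀ k, z x k ∈ G)
    (hd : ∀ x ∈ G, ∀ k, dist x (z x k) ≤ C * Metric.infDist (z x k) (frontier G) ^ β)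
    (hcard : ∀ x ∈ G, ∀ w, ∀ S : Finset ℕ,
      (∀ k ∈ S, k < N x ∧ dist w (z x k) < Metric.infDist (z x k) (frontier G) / 2) → S.card ≤ 31) :
    ∃ K : ℝ≥0∞, K ≠ ∞ ∧ ∀ (U : Set (EuclideanSpace ℝ (Fin n))), U ⊆ G → U.Countable →
      (U.PairwiseDisjoint fun a => Metric.closedBall a (Metric.infDist a (frontier G) / 40)) →
      ∀ w ∈ G, ∑' i : U, volume (Metric.ball (i : EuclideanSpace ℝ (Fin n))
          (Metric.infDist (i : EuclideanSpace ℝ (Fin n)) (frontier G) / 40)) *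
        ∑ k ∈ Finset.range (N i), kerW G ((n:ℝ) - n * β) (z i k) w ≤ K := by
  obtain ⟨D, hD, hDle⟩ := dd_bdd hf hGb
  set D1 := (max D 1) with hD1
  set c0 := 2 * C + 2 * D1 with hc0
  set c2 := 2 * c0 + D1 with hc2
  have hD1' : 1 ≤ D1 := le_max_right _ _
  refine ⟨31 * 4 ^ n * ENNReal.ofReal c2 ^ n, by finiteness, ?_⟩
  intro U hUG hUc hdis w hw
  have hUct : Countable U := hUc.to_subtype
  have hdw := dd_pos hf hGo hw
  set ρ := Metric.infDist w (frontier G) ^ β with hρd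
  have hρ : 0 < ρ := Real.rpow_pos_of_pos hdw _
  have hdρ : Metric.infDist w (frontier G) ≤ D1 * ρ := by
    have h1 : Metric.infDist w (frontier G) =
        Metric.infDist w (frontier G) ^ (1 - β) * ρ := by
      rw [hρd, ← Real.rpow_add hdw]; simp
    rw [h1]
    gcongr
    calc Metric.infDist w (frontier G) ^ (1 - β) ≤ D1 ^ (1 - β) :=
          Real.rpow_le_rpow hdw.le ((hDle w hw).trans (le_max_left _ _)) (by linarith)
      _ ≤ D1 ^ (1:ℝ) := Real.rpow_le_rpow_of_exponent_le hD1' (by linarith)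
      _ = D1 := Real.rpow_one _
  have hB0 : volume (Metric.ball w ρ) ≠ 0 := (vol_ball_pos w hρ).ne'
  have hBt : volume (Metric.ball w ρ) ≠ ∞ := Metric.isBounded_ball.measure_lt_top.ne
  let cond : EuclideanSpace ℝ (Fin n) → Prop := fun i =>
    ∃ k, k < N i ∧ dist w (z i k) < Metric.infDist (z i k) (frontier G) / 2
  let s : U → Set (EuclideanSpace ℝ (Fin n)) := fun i =>
    {v | v ∈ Metric.ball (i : EuclideanSpace ℝ (Fin n))
          (Metric.infDist (i : EuclideanSpace ℝ (Fin n)) (frontier G) / 40) ∧ cond i}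
  have hs_true : ∀ i : U, cond i → s i = Metric.ball (i : EuclideanSpace ℝ (Fin n))
          (Metric.infDist (i : EuclideanSpace ℝ (Fin n)) (frontier G) / 40) := by
    intro i hi; ext v; simp [s, hi]
  have hs_false : ∀ i : U, ¬ cond i → s i = ∅ := by
    intro i hi; ext v; simp [s, hi]
  have hsub : ∀ i : U, s i ⊆ Metric.ball w (c2 * ρ) := by
    intro i
    by_cases hi : cond i
    swap
    · rw [hs_false i hi]; exact Set.empty_subset _
    rw [hs_true i hi]
    obtain ⟨k, hk, hk2⟩ := hi
    have hiG := hUG i.2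
    have a1 := hd i hiG k
    have hzG := hz i hiG k
    have hdz := dd_pos hf hGo hzG
    have l1 := dd_lip (G := G) (z i k) w
    have l2 := dd_lip (G := G) (i : EuclideanSpace ℝ (Fin n)) w
    rw [dist_comm] at l1
    have a2 : Metric.infDist (z i k) (frontier G) ≤ 2 * Metric.infDist w (frontier G) := by linarith
    have a3 : Metric.infDist (z i k) (frontier G) ^ β ≤ 2 * ρ := by
      calc _ ≤ (2 * Metric.infDist w (frontier G)) ^ β := Real.rpow_le_rpow hdz.le a2 hβ.le
        _ = 2 ^ β * ρ := Real.mul_rpow (by norm_num) hdw.le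
        _ ≤ 2 ^ (1:ℝ) * ρ := by
            gcongr
            norm_num
        _ = _ := by simp
    have a4 : dist (i : EuclideanSpace ℝ (Fin n)) w ≤ c0 * ρ := by
      have t1 := dist_triangle_right (i : EuclideanSpace ℝ (Fin n)) w (z i k)
      have t2 : C * Metric.infDist (z i k) (frontier G) ^ β ≤ C * (2 * ρ) := by gcongr
      have t3 : 0 ≤ D1 * ρ := by positivity
      rw [hc0]; nlinarith
    apply Metric.ball_subset_ball'
    have t3 : 0 ≤ D1 * ρ := by positivity
    have t4 : 0 ≤ c0 * ρ := by positivity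
    rw [hc2]
    nlinarith
  have hsum : ∑' i : U, volume (s i) ≤ ENNReal.ofReal c2 ^ n * volume (Metric.ball w ρ) := by
    rw [← measure_iUnion]
    · calc _ ≤ volume (Metric.ball w (c2 * ρ)) := measure_mono (Set.iUnion_subset hsub)
        _ ≤ _ := vol_cmp hn w w (by positivity) hρ (by positivity) le_rfl
    · intro i j hij
      have := hdis i.2 j.2 (fun h => hij (Subtype.ext h))
      exact this.mono (fun v hv => Metric.ball_subset_closedBall hv.1)
        (fun v hv => Metric.ball_subset_closedBall hv.1)
    · intro i
      by_cases hi : cond i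
      · rw [hs_true i hi]; exact measurableSet_ball
      · rw [hs_false i hi]; exact MeasurableSet.empty
  have hterm : ∀ i : U, volume (Metric.ball (i : EuclideanSpace ℝ (Fin n))
          (Metric.infDist (i : EuclideanSpace ℝ (Fin n)) (frontier G) / 40)) *
        ∑ k ∈ Finset.range (N i), kerW G ((n:ℝ) - n * β) (z i k) w ≤
        volume (s i) * (31 * (4 ^ n * (volume (Metric.ball w ρ))⁻¹)) := by
    intro i
    have hiG := hUG i.2
    classical
    set S := (Finset.range (N i)).filter
      (fun k => dist w (z i k) < Metric.infDist (z i k) (frontier G) / 2) with hS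
    have hSsum : ∑ k ∈ Finset.range (N i), kerW G ((n:ℝ) - n * β) (z i k) w =
        ∑ k ∈ S, kerW G ((n:ℝ) - n * β) (z i k) w := by
      symm
      apply Finset.sum_filter_of_ne
      intro k _ hne
      by_contra hcon
      apply hne
      rw [kerW, Set.indicator_of_notMem]
      rwa [Metric.mem_ball]
    rw [hSsum]
    have hle : ∑ k ∈ S, kerW G ((n:ℝ) - n * β) (z i k) w ≤
        31 * (4 ^ n * (volume (Metric.ball w ρ))⁻¹) := by
      calc _ ≤ ∑ k ∈ S, (4 ^ n * (volume (Metric.ball w ρ))⁻¹) :=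
            Finset.sum_le_sum fun k _ => kerW_le hn hf hGo hβ hβ1 (hz i hiG k) hw
        _ = S.card * (4 ^ n * (volume (Metric.ball w ρ))⁻¹) := by
            rw [Finset.sum_const, nsmul_eq_mul]
        _ ≤ _ := by
            gcongr
            have := hcard i hiG w S (fun k hk => by
              rw [hS, Finset.mem_filter, Finset.mem_range] at hk; exact hk)
            exact_mod_cast this
    by_cases hi : cond i
    · rw [hs_true i hi]; gcongr
    · have : S = ∅ := by
        rw [Finset.eq_empty_iff_forall_notMem]
        intro k hk
        rw [hS, Finset.mem_filter, Finset.mem_range] at hk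
        exact hi ⟨k, hk⟩
      rw [this]; simp
  calc _ ≤ ∑' i : U, volume (s i) * (31 * (4 ^ n * (volume (Metric.ball w ρ))⁻¹)) :=
        ENNReal.tsum_le_tsum hterm
    _ = (∑' i : U, volume (s i)) * (31 * (4 ^ n * (volume (Metric.ball w ρ))⁻¹)) :=
        ENNReal.tsum_mul_right
    _ ≤ (ENNReal.ofReal c2 ^ n * volume (Metric.ball w ρ)) *
          (31 * (4 ^ n * (volume (Metric.ball w ρ))⁻¹)) := by gcongr
    _ = 31 * 4 ^ n * ENNReal.ofReal c2 ^ n * (volume (Metric.ball w ρ) *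
          (volume (Metric.ball w ρ))⁻¹) := by ring
    _ = _ := by rw [ENNReal.mul_inv_cancel hB0 hBt, mul_one]

end E1

open MeasureTheory ENNReal

section E2
variable {n : ℕ} {G : Set (EuclideanSpace ℝ (Fin n))}

lemma log_cmp {a b : ℝ} (ha : 0 < a) (hb : 0 < b) (h1 : a ≤ 2 * b) (h2 : b ≤ 2 * a) :
    |Real.log a| ≤ |Real.log b| + 1 := by
  have l2 : Real.log 2 ≤ 1 := by linarith [Real.log_le_sub_one_of_pos (zero_lt_two' ℝ)]
  have e1 := Real.log_le_log ha h1
  have e2 := Real.log_le_log hb h2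
  rw [Real.log_mul (by norm_num) hb.ne'] at e1
  rw [Real.log_mul (by norm_num) ha.ne'] at e2
  rw [abs_le]
  constructor
  · linarith [neg_abs_le (Real.log b)]
  · linarith [le_abs_self (Real.log b)]

lemma weighted (hn : 2 ≤ n) (hf : (frontier G).Nonempty) (hGo : IsOpen G) (hGc : IsConnected G)
    (hGb : Bornology.IsBounded G) {β : ℝ} (hβ : 0 < β) (hβ1 : β < 1)
    (hp : 1 ≤ (n:ℝ) - n * β) {x₀ : EuclideanSpace ℝ (Fin n)} (hx₀ : x₀ ∈ G) {c : ℝ}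
    (hQ : QHBCWith G β x₀ c) :
    ∃ K : ℝ≥0∞, K ≠ ∞ ∧ ∀ u : EuclideanSpace ℝ (Fin n) → ℝ, DifferentiableOn ℝ u G →
      IntegrableOn u G →
      ∫⁻ x in G, ‖u x - avgW G u x₀‖ₑ ^ ((n:ℝ) - n * β) *
        (ENNReal.ofReal ((1 + |Real.log (Metric.infDist x (frontier G))|) ^ ((n:ℝ) - n * β - 1)))⁻¹
      ≤ K * ∫⁻ x in G, ‖fderiv ℝ u x‖ₑ ^ ((n:ℝ) - n * β) := by
  obtain ⟨D, hD, hDle⟩ := dd_bdd hf hGb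
  obtain ⟨C, hC, hch⟩ := chain_exists hf hGo hGc hx₀ hβ hQ
  choose! N z hN hz0 hzN hzG hzs hNle hzd hcard using hch
  obtain ⟨K, hK, hover⟩ := overlap hn hf hGo hGb hβ hβ1 C hC N z hzG hzd hcard
  obtain ⟨U, hUG, hdis, hcov⟩ := Vitali.exists_disjoint_subfamily_covering_enlargement_closedBall
    G (fun x => x) (fun x => Metric.infDist x (frontier G) / 40) (D / 40)
    (fun a ha => by have := hDle a ha; linarith) 5 (by norm_num)
  have hUc : U.Countable := by
    apply Set.PairwiseDisjoint.countable_of_nonempty_interior hdis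
    intro a ha
    have := dd_pos hf hGo (hUG ha)
    refine ⟨a, ?_⟩
    exact Metric.ball_subset_interior_closedBall (Metric.mem_ball_self (by linarith))
  have hUct : Countable U := hUc.to_subtype
  have hov := hover U hUG hUc hdis
  set p := (n:ℝ) - n * β with hpdef
  set c1 : ℝ≥0∞ := ENNReal.ofReal ((2 * (C + 1)) ^ (p - 1)) with hc1
  refine ⟨c1 * (2 * 18 ^ n) * 10 ^ n * K, by finiteness, ?_⟩
  intro u hud hui
  set Wt : EuclideanSpace ℝ (Fin n) → ℝ≥0∞ := fun x =>
    ENNReal.ofReal ((1 + |Real.log (Metric.infDist x (frontier G))|) ^ (p - 1)) with hWt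
  set F : EuclideanSpace ℝ (Fin n) → ℝ≥0∞ := fun x => ‖u x - avgW G u x₀‖ₑ ^ p * (Wt x)⁻¹ with hF
  set b : EuclideanSpace ℝ (Fin n) → Set (EuclideanSpace ℝ (Fin n)) := fun i =>
    Metric.ball i (Metric.infDist i (frontier G) / 4) with hb
  set V : EuclideanSpace ℝ (Fin n) → ℝ≥0∞ := fun i =>
    volume (Metric.ball i (Metric.infDist i (frontier G) / 40)) with hV
  have hcover : G ⊆ ⋃ i : U, b i := by
    intro a ha
    obtain ⟨i, hi, hsub⟩ := hcov a ha
    have hda := dd_pos hf hGo ha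
    have hdi := dd_pos hf hGo (hUG hi)
    have : a ∈ Metric.closedBall i (5 * (Metric.infDist i (frontier G) / 40)) :=
      hsub (Metric.mem_closedBall_self (by linarith))
    rw [Metric.mem_closedBall] at this
    exact Set.mem_iUnion.2 ⟨⟨i, hi⟩, by rw [hb]; simp only [Metric.mem_ball]; linarith⟩
  have hloc : ∀ i : U, ∫⁻ x in b i, F x ≤ c1 * (2 * 18 ^ n) * 10 ^ n *
      (V i * ∑ k ∈ Finset.range (N i), TW G u p (z i k)) := by
    intro i
    have hiG := hUG i.2
    have hdi := dd_pos hf hGo hiG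
    set P := ((N i + 1 : ℕ) : ℝ≥0∞) ^ (p - 1) with hP
    have hP0 : P ≠ 0 := by
      rw [hP, ne_eq, ENNReal.rpow_eq_zero_iff]
      push Not
      constructor
      · intro h; exact absurd h (by positivity)
      · intro h; exact absurd h (by finiteness)
    have hPt : P ≠ ∞ := ENNReal.rpow_ne_top_of_nonneg (by linarith) (by finiteness)
    have hW : ∀ x ∈ b i, (Wt x)⁻¹ ≤ c1 * P⁻¹ := by
      intro x hx
      rw [hb, Metric.mem_ball] at hx
      have l1 := dd_lip (G := G) x i
      have l2 := dd_lip (G := G) (i : EuclideanSpace ℝ (Fin n)) x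
      rw [dist_comm] at l2
      have hdx : 0 < Metric.infDist x (frontier G) := by linarith
      have hlog := log_cmp hdi hdx (by linarith) (by linarith)
      have hNi := hNle i hiG
      have hreal : ((N i + 1 : ℕ) : ℝ) ≤ 2 * (C + 1) *
          (1 + |Real.log (Metric.infDist x (frontier G))|) := by
        push_cast
        have := abs_nonneg (Real.log (Metric.infDist x (frontier G)))
        have h3 : C * (1 + |Real.log (Metric.infDist (i : EuclideanSpace ℝ (Fin n)) (frontier G))|) ≤
          C * (2 + |Real.log (Metric.infDist x (frontier G))|) :=
          mul_le_mul_of_nonneg_left (by linarith) hC.le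
        nlinarith
      have hPle : P ≤ c1 * Wt x := by
        rw [hP, hc1, hWt, ← ENNReal.ofReal_mul (by positivity),
          ← Real.mul_rpow (by positivity) (by positivity),
          ← ENNReal.ofReal_rpow_of_nonneg (by positivity) (by linarith)]
        refine ENNReal.rpow_le_rpow ?_ (by linarith)
        rw [← ENNReal.ofReal_natCast]
        exact ENNReal.ofReal_le_ofReal hreal
      have hWpos : Wt x ≠ 0 := by
        rw [hWt]; simp only [ne_eq, ENNReal.ofReal_eq_zero, not_le]; positivity
      have hWtop : Wt x ≠ ∞ := ENNReal.ofReal_ne_top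
      rw [← div_eq_mul_inv, ENNReal.le_div_iff_mul_le (Or.inl hP0) (Or.inl hPt), mul_comm,
        ← div_eq_mul_inv, ENNReal.div_le_iff hWpos hWtop]
      exact hPle
    have hce := chain_est hn hf hGo hud hui hp (hN i hiG) (z i) (hzG i hiG) (hzs i hiG)
    rw [hz0 i hiG, hzN i hiG] at hce
    have hVb : volume (b i) ≤ 10 ^ n * V i := by
      have := vol_cmp hn (i : EuclideanSpace ℝ (Fin n)) i
        (r := Metric.infDist (i : EuclideanSpace ℝ (Fin n)) (frontier G) / 4)
        (s := Metric.infDist (i : EuclideanSpace ℝ (Fin n)) (frontier G) / 40)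
        (by linarith) (by linarith) (by norm_num : (0:ℝ) ≤ 10) (by linarith)
      simpa using this
    calc ∫⁻ x in b i, F x ≤ ∫⁻ x in b i, c1 * P⁻¹ * ‖u x - avgW G u x₀‖ₑ ^ p := by
          apply setLIntegral_mono' measurableSet_ball
          intro x hx
          rw [hF, mul_comm]
          simp only
          gcongr
          exact hW x hx
      _ = c1 * P⁻¹ * ∫⁻ x in b i, ‖u x - avgW G u x₀‖ₑ ^ p :=
          lintegral_const_mul' _ _ (ENNReal.mul_ne_top (by finiteness) (ENNReal.inv_ne_top.2 hP0))
      _ ≤ c1 * P⁻¹ * (P * (2 * 18 ^ n) * (volume (b i) *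
            ∑ k ∈ Finset.range (N i), TW G u p (z i k))) := by
          gcongr
      _ = c1 * (2 * 18 ^ n) * (volume (b i) *
            ∑ k ∈ Finset.range (N i), TW G u p (z i k)) * (P * P⁻¹) := by ring
      _ = c1 * (2 * 18 ^ n) * (volume (b i) *
            ∑ k ∈ Finset.range (N i), TW G u p (z i k)) := by
          rw [ENNReal.mul_inv_cancel hP0 hPt, mul_one]
      _ ≤ c1 * (2 * 18 ^ n) * (10 ^ n * V i *
            ∑ k ∈ Finset.range (N i), TW G u p (z i k)) := by gcongr
      _ = _ := by ring
  have hgm : Measurable fun w => ‖fderiv ℝ u w‖ₑ ^ p := (measurable_fderiv ℝ u).enorm.pow_const p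
  have hmain : ∑' i : U, V i * ∑ k ∈ Finset.range (N i), TW G u p (z i k) ≤
      K * ∫⁻ x in G, ‖fderiv ℝ u x‖ₑ ^ p := by
    have e : ∀ i : U, V i * ∑ k ∈ Finset.range (N i), TW G u p (z i k) =
        ∫⁻ w in G, (V i * ∑ k ∈ Finset.range (N i), kerW G p (z i k) w) * ‖fderiv ℝ u w‖ₑ ^ p := by
      intro i
      have hiG := hUG i.2
      have hVt : V i ≠ ∞ := Metric.isBounded_ball.measure_lt_top.ne
      simp_rw [mul_assoc, Finset.sum_mul]
      rw [lintegral_const_mul' _ _ hVt, lintegral_finsetSum]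
      · congr 1
        apply Finset.sum_congr rfl
        intro k _
        exact TW_eq hf hGo u (by linarith) (hzG i hiG k)
      · intro k _
        exact (kerW_meas p _).mul hgm
    simp_rw [e]
    rw [← lintegral_tsum]
    · calc _ ≤ ∫⁻ w in G, K * ‖fderiv ℝ u w‖ₑ ^ p := by
            apply setLIntegral_mono' hGo.measurableSet
            intro w hw
            rw [ENNReal.tsum_mul_right]
            gcongr
            exact hov w hw
        _ = _ := lintegral_const_mul' _ _ hK
    · intro i
      apply Measurable.aemeasurable
      exact (measurable_const.mul (Finset.measurable_fun_sum _ fun k _ => kerW_meas p _)).mul hgm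
  calc ∫⁻ x in G, F x ≤ ∫⁻ x in ⋃ i : U, b i, F x := lintegral_mono_set hcover
    _ ≤ ∑' i : U, ∫⁻ x in b i, F x := lintegral_iUnion_le _ _
    _ ≤ ∑' i : U, c1 * (2 * 18 ^ n) * 10 ^ n *
      (V i * ∑ k ∈ Finset.range (N i), TW G u p (z i k)) := ENNReal.tsum_le_tsum hloc
    _ = c1 * (2 * 18 ^ n) * 10 ^ n * ∑' i : U,
      (V i * ∑ k ∈ Finset.range (N i), TW G u p (z i k)) := ENNReal.tsum_mul_left
    _ ≤ c1 * (2 * 18 ^ n) * 10 ^ n * (K * ∫⁻ x in G, ‖fderiv ℝ u x‖ₑ ^ p) := by gcongr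
    _ = _ := by ring

end E2

open MeasureTheory ENNReal

section E3
variable {n : ℕ} {G : Set (EuclideanSpace ℝ (Fin n))}

lemma unweight {α : Type*} [MeasurableSpace α] (ν : Measure α) (a L : α → ℝ≥0∞)
    (ha : AEMeasurable a ν) (hL : AEMeasurable L ν) (hL0 : ∀ x, L x ≠ 0) (hLt : ∀ x, L x ≠ ∞)
    {p q : ℝ} (hq : 1 ≤ q) (hqp : q < p) :
    ∫⁻ x, a x ^ q ∂ν ≤ (∫⁻ x, a x ^ p * (L x)⁻¹ ∂ν) ^ (q / p) *
      (∫⁻ x, L x ^ (q / (p - q)) ∂ν) ^ ((p - q) / p) := by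
  have hp0 : 0 < p := by linarith
  have hq0 : 0 < q := by linarith
  have hpq : 0 < p - q := by linarith
  have hH : (p / q).HolderConjugate (p / (p - q)) := by
    rw [Real.holderConjugate_iff]
    constructor
    · rw [one_lt_div hq0]; exact hqp
    · rw [inv_div, inv_div]; field_simp; ring
  have h := ENNReal.lintegral_mul_le_Lp_mul_Lq ν hH
    (f := fun x => (a x ^ p * (L x)⁻¹) ^ (q / p)) (g := fun x => L x ^ (q / p))
    (((ha.pow_const p).mul hL.inv).pow_const _) (hL.pow_const _)
  have e1 : ∀ x, ((fun x => (a x ^ p * (L x)⁻¹) ^ (q / p)) * (fun x => L x ^ (q / p))) x = a x ^ q := by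
    intro x
    simp only [Pi.mul_apply]
    rw [← ENNReal.mul_rpow_of_nonneg _ _ (by positivity), mul_assoc,
      ENNReal.inv_mul_cancel (hL0 x) (hLt x), mul_one, ← ENNReal.rpow_mul]
    congr 1; field_simp
  have e2 : ∀ x, ((a x ^ p * (L x)⁻¹) ^ (q / p)) ^ (p / q) = a x ^ p * (L x)⁻¹ := by
    intro x
    rw [← ENNReal.rpow_mul, show q / p * (p / q) = 1 by field_simp, ENNReal.rpow_one]
  have e3 : ∀ x, (L x ^ (q / p)) ^ (p / (p - q)) = L x ^ (q / (p - q)) := by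
    intro x
    rw [← ENNReal.rpow_mul]; congr 1; field_simp
  simp_rw [e1, e2, e3, one_div_div] at h
  exact h

lemma recenter {α : Type*} [MeasurableSpace α] (ν : Measure α) (h0 : ν Set.univ ≠ 0)
    [IsFiniteMeasure ν] (u : α → ℝ) (hu : Integrable u ν) (m : ℝ) {q : ℝ} (hq : 1 ≤ q) :
    ∫⁻ x, ‖u x - (∫ y, u y ∂ν) / (ν Set.univ).toReal‖ₑ ^ q ∂ν ≤
      2 ^ q * ∫⁻ x, ‖u x - m‖ₑ ^ q ∂ν := by
  have ht : ν Set.univ ≠ ∞ := measure_ne_top _ _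
  set A := (∫ y, u y ∂ν) / (ν Set.univ).toReal
  have h1 : ‖m - A‖ₑ ^ q ≤ (ν Set.univ)⁻¹ * ∫⁻ x, ‖u x - m‖ₑ ^ q ∂ν := by
    have := avg_jensen ν h0 u hu m hq
    simp_rw [fun x => show ‖u x - m‖ₑ = ‖m - u x‖ₑ by rw [← enorm_neg, neg_sub]]
    exact this
  have h2 : (2:ℝ≥0∞) ^ (q - 1) ≠ ∞ := ENNReal.rpow_ne_top_of_nonneg (by linarith) (by simp)
  calc _ ≤ ∫⁻ x, 2 ^ (q - 1) * (‖u x - m‖ₑ ^ q + ‖m - A‖ₑ ^ q) ∂ν := by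
        apply lintegral_mono
        intro x
        have : ‖u x - A‖ₑ ≤ ‖u x - m‖ₑ + ‖m - A‖ₑ := by
          rw [show u x - A = (u x - m) + (m - A) by ring]; exact enorm_add_le _ _
        calc _ ≤ (‖u x - m‖ₑ + ‖m - A‖ₑ) ^ q := ENNReal.rpow_le_rpow this (by linarith)
          _ ≤ _ := ENNReal.rpow_add_le_mul_rpow_add_rpow _ _ hq
    _ = 2 ^ (q - 1) * ((∫⁻ x, ‖u x - m‖ₑ ^ q ∂ν) + ‖m - A‖ₑ ^ q * ν Set.univ) := by
        rw [lintegral_const_mul' _ _ h2, lintegral_add_right _ measurable_const, lintegral_const]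
    _ ≤ 2 ^ (q - 1) * ((∫⁻ x, ‖u x - m‖ₑ ^ q ∂ν) +
          ((ν Set.univ)⁻¹ * ∫⁻ x, ‖u x - m‖ₑ ^ q ∂ν) * ν Set.univ) := by gcongr
    _ = 2 ^ (q - 1) * ((∫⁻ x, ‖u x - m‖ₑ ^ q ∂ν) +
          (∫⁻ x, ‖u x - m‖ₑ ^ q ∂ν) * (ν Set.univ * (ν Set.univ)⁻¹)) := by ring
    _ = (2 ^ (q - 1) * 2) * (∫⁻ x, ‖u x - m‖ₑ ^ q ∂ν) := by
        rw [ENNReal.mul_inv_cancel h0 ht]; ring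
    _ = _ := by
        congr 1
        conv_lhs => rw [← ENNReal.rpow_one 2, ← ENNReal.rpow_mul, one_mul]
        rw [← ENNReal.rpow_add _ _ (by simp) (by simp)]
        congr 1; ring

end E3

/-- If `β ∈ (0,1)`, `1 ≤ q < n - nβ`, and the bounded domain `G ⊂ ℝⁿ`
satisfies a `β`-quasihyperbolic boundary condition, then `G` supports the
`(q, n - nβ)`-Poincaré inequality. -/
theorem stmt_13 (n : ℕ) (hn : 2 ≤ n) (G : Set (EuclideanSpace ℝ (Fin n)))
    (hGo : IsOpen G) (hGc : IsConnected G) (hGb : Bornology.IsBounded G)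
    (β : ℝ) (hβ : β ∈ Set.Ioo (0:ℝ) 1) (hqhbc : QHBC G β)
    (q : ℝ) (hq : 1 ≤ q) (hq' : q < (n:ℝ) - n * β) :
    SupportsPoincare G q ((n:ℝ) - n * β) := by
  obtain ⟨x₀, hx₀, c, hQ⟩ := hqhbc
  have hf : (frontier G).Nonempty := frontier_ne hn ⟨x₀, hx₀⟩ hGb
  obtain ⟨K, hK, hw⟩ := weighted hn hf hGo hGc hGb hβ.1 hβ.2 (by linarith) hx₀ hQ
  set p := (n:ℝ) - n * β with hp
  have hp0 : 0 < p := by linarith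
  have hq0 : 0 < q := by linarith
  have hM := logmoment hn hf hGo hGc hGb hx₀ hβ.1 hQ ((p - 1) * (q / (p - q)))
  set M := ∫⁻ x in G, ENNReal.ofReal
    ((1 + |Real.log (Metric.infDist x (frontier G))|) ^ ((p - 1) * (q / (p - q)))) with hMdef
  set C1 : ℝ≥0∞ := 2 ^ q * K ^ (q / p) * M ^ ((p - q) / p) with hC1
  have hC1t : C1 ≠ ∞ := by
    have h1 : (2:ℝ≥0∞) ^ q ≠ ∞ := ENNReal.rpow_ne_top_of_nonneg hq0.le (by simp)
    have h2 : K ^ (q / p) ≠ ∞ := ENNReal.rpow_ne_top_of_nonneg (by positivity) hK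
    have h3 : M ^ ((p - q) / p) ≠ ∞ :=
      ENNReal.rpow_ne_top_of_nonneg (div_nonneg (by linarith) hp0.le) hM
    exact ENNReal.mul_ne_top (ENNReal.mul_ne_top h1 h2) h3
  refine ⟨(C1 ^ (1 / q)).toReal, fun u hud hui hgi => ?_⟩
  have hGt : volume G ≠ ∞ := hGb.measure_lt_top.ne
  have hG0 : volume G ≠ 0 := (hGo.measure_pos _ ⟨x₀, hx₀⟩).ne'
  have hfin : IsFiniteMeasure (volume.restrict G) := ⟨by simpa using hGt.lt_top⟩
  set J := ∫⁻ x in G, ‖fderiv ℝ u x‖ₑ ^ p with hJ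
  set A := (∫ y in G, u y) / (volume G).toReal with hA
  set X := ∫⁻ x in G, ‖u x - A‖ₑ ^ q with hX
  -- gradient side
  have hJ1 : J = ∫⁻ x in G, ENNReal.ofReal (‖fderivWithin ℝ u G x‖ ^ p) := by
    apply setLIntegral_congr_fun hGo.measurableSet
    intro x hx
    simp only
    rw [fderivWithin_of_isOpen hGo hx, ← ENNReal.ofReal_rpow_of_nonneg (norm_nonneg _) hp0.le,
      ofReal_norm]
  have hJt : J ≠ ∞ := by
    rw [hJ1]
    have := hgi.2
    rw [hasFiniteIntegral_iff_ofReal (Filter.Eventually.of_forall fun x => by positivity)] at this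
    exact this.ne
  have hJr : ∫ x in G, ‖fderivWithin ℝ u G x‖ ^ p = J.toReal := by
    rw [hJ1, integral_eq_lintegral_of_nonneg_ae
      (Filter.Eventually.of_forall fun x => by positivity) hgi.1]
  have hum : AEStronglyMeasurable (fun x => u x - A) (volume.restrict G) :=
    hui.1.sub aestronglyMeasurable_const
  have hXr : ∫ x in G, |u x - A| ^ q = X.toReal := by
    rw [integral_eq_lintegral_of_nonneg_ae]
    · congr 2
      ext x
      rw [← ENNReal.ofReal_rpow_of_nonneg (abs_nonneg _) hq0.le, ← Real.norm_eq_abs, ofReal_norm]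
    · exact Filter.Eventually.of_forall fun x => by positivity
    · have := (hum.norm.aemeasurable.pow_const q).aestronglyMeasurable
      exact this
  have hmain : X ≤ C1 * J ^ (q / p) := by
    set m := avgW G u x₀
    have h1 : X ≤ 2 ^ q * ∫⁻ x in G, ‖u x - m‖ₑ ^ q := by
      have := recenter (volume.restrict G) (by simpa using hG0) u hui m hq
      simpa using this
    have hLm : Measurable fun x : EuclideanSpace ℝ (Fin n) =>
        ENNReal.ofReal ((1 + |Real.log (Metric.infDist x (frontier G))|) ^ (p - 1)) := by
      have : Measurable fun x : EuclideanSpace ℝ (Fin n) => Metric.infDist x (frontier G) :=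
        (Metric.continuous_infDist_pt _).measurable
      have h3 : Measurable fun x : EuclideanSpace ℝ (Fin n) =>
        1 + |Real.log (Metric.infDist x (frontier G))| := (this.log.abs).const_add 1
      exact (h3.pow_const _).ennreal_ofReal
    have h2 := unweight (volume.restrict G) (fun x => ‖u x - m‖ₑ) _
      (hui.1.sub aestronglyMeasurable_const).enorm hLm.aemeasurable
      (fun x => by simp only [ne_eq, ENNReal.ofReal_eq_zero, not_le]; positivity)
      (fun x => ENNReal.ofReal_ne_top) hq hq'
    have h3 : ∀ x : EuclideanSpace ℝ (Fin n),
        ENNReal.ofReal ((1 + |Real.log (Metric.infDist x (frontier G))|) ^ (p - 1)) ^ (q / (p - q)) =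
        ENNReal.ofReal
          ((1 + |Real.log (Metric.infDist x (frontier G))|) ^ ((p - 1) * (q / (p - q)))) := by
      intro x
      rw [ENNReal.ofReal_rpow_of_nonneg (by positivity) (div_nonneg hq0.le (by linarith)),
        ← Real.rpow_mul (by positivity)]
    simp_rw [h3] at h2
    calc X ≤ 2 ^ q * ∫⁻ x in G, ‖u x - m‖ₑ ^ q := h1
      _ ≤ 2 ^ q * ((K * J) ^ (q / p) * M ^ ((p - q) / p)) := by
          gcongr
          refine h2.trans ?_
          gcongr
          exact hw u hud hui
      _ = _ := by
          rw [ENNReal.mul_rpow_of_nonneg _ _ (by positivity), hC1]; ring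
  rw [hXr, hJr, ENNReal.toReal_rpow, ENNReal.toReal_rpow, ← ENNReal.toReal_mul]
  apply ENNReal.toReal_mono
  · exact ENNReal.mul_ne_top (ENNReal.rpow_ne_top_of_nonneg (by positivity) hC1t)
      (ENNReal.rpow_ne_top_of_nonneg (by positivity) hJt)
  · calc X ^ (1 / q) ≤ (C1 * J ^ (q / p)) ^ (1 / q) := by gcongr
      _ = _ := by
          rw [ENNReal.mul_rpow_of_nonneg _ _ (by positivity), ← ENNReal.rpow_mul]
          congr 2; field_simp
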